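/- arXiv:1503.03670 — 2 statements merged into one kernel-verified Lean document; each statement's English description precedes it below -/
import Mathlib

section
/- Let a²,b²,c² > 0, k ∈ ℤ∖{0}, 0 < R ≤ ∞, and let w₀, w₁, w₂ ∈ C²((0,R)). Define Q : B_R∖{0} → S₀ by Q(x) = w₀(r)E₀ + w₁(r)E₁(φ) + w₂(r)E₂(φ) for x = (r cos φ, r sin φ). Then Q satisfies the Euler–Lagrange equation ΔQ = −a²Q − b²(Q² − (1/3)|Q|²I₃) + c²|Q|²Q on B_R∖{0} (the Laplacian acting componentwise on matrix entries) if and only if, with ρ² = w₀² + w₁² + w₂², the functions satisfy on (0,R): w₀'' + w₀'/r = w₀(−a² + c²ρ² − (b²/√6)w₀) + (b²/√6)(w₁² + w₂²); w₁'' + w₁'/r − k²w₁/r² = w₁(−a² + c²ρ² + (2b²/√6)w₀); and w₂'' + w₂'/r − k²w₂/r² = w₂(−a² + c²ρ² + (2b²/√6)w₀). -/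
open Real Matrix
open scoped ENNReal

noncomputable section

abbrev Mat3 := Matrix (Fin 3) (Fin 3) ℝ

/-- `Q` is a symmetric traceless 3×3 real matrix, i.e. an element of `S₀`. -/
def isS0 (Q : Mat3) : Prop := Qᵀ = Q ∧ Q.trace = 0

def e1 : Fin 3 → ℝ := ![1, 0, 0]
def e2 : Fin 3 → ℝ := ![0, 1, 0]
def e3 : Fin 3 → ℝ := ![0, 0, 1]

/-- `n(φ) = (cos(kφ/2), sin(kφ/2), 0)`. -/
def nvec (k : ℤ) (φ : ℝ) : Fin 3 → ℝ := ![Real.cos ((k : ℝ) * φ / 2), Real.sin ((k : ℝ) * φ / 2), 0]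

/-- `m(φ) = (−sin(kφ/2), cos(kφ/2), 0)`. -/
def mvec (k : ℤ) (φ : ℝ) : Fin 3 → ℝ := ![-Real.sin ((k : ℝ) * φ / 2), Real.cos ((k : ℝ) * φ / 2), 0]

/-- `I₂ = I₃ − e₃ ⊗ e₃`. -/
def I2 : Mat3 := 1 - vecMulVec e3 e3

def E0 : Mat3 := Real.sqrt (3/2) • (vecMulVec e3 e3 - (1/3 : ℝ) • (1 : Mat3))
def E1 (k : ℤ) (φ : ℝ) : Mat3 :=
  Real.sqrt 2 • (vecMulVec (nvec k φ) (nvec k φ) - (1/2 : ℝ) • I2)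
def E2mat (k : ℤ) (φ : ℝ) : Mat3 :=
  (Real.sqrt 2)⁻¹ • (vecMulVec (nvec k φ) (mvec k φ) + vecMulVec (mvec k φ) (nvec k φ))
def E3mat : Mat3 := (Real.sqrt 2)⁻¹ • (vecMulVec e1 e3 + vecMulVec e3 e1)
def E4mat : Mat3 := (Real.sqrt 2)⁻¹ • (vecMulVec e2 e3 + vecMulVec e3 e2)

/-- The rotation `R_k(ψ)` of winding `k/2` about the vertical axis. -/
def Rk (k : ℤ) (ψ : ℝ) : Mat3 :=
  !![Real.cos ((k : ℝ) * ψ / 2), -Real.sin ((k : ℝ) * ψ / 2), 0;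
     Real.sin ((k : ℝ) * ψ / 2),  Real.cos ((k : ℝ) * ψ / 2), 0;
     0, 0, 1]

/-- The Landau-de Gennes bulk potential. -/
def fbulk (a2 b2 c2 : ℝ) (Q : Mat3) : ℝ :=
  -(a2/2) * (Q*Q).trace - (b2/3) * (Q*Q*Q).trace + (c2/4) * ((Q*Q).trace)^2

/-- The constant `s₊ = (b² + √(b⁴ + 24a²c²))/(4c²)`. -/
def splus (a2 b2 c2 : ℝ) : ℝ := (b2 + Real.sqrt (b2^2 + 24*a2*c2)) / (4*c2)

/-- Laplacian of a scalar function on `ℝ²`, as the sum of the two repeated partial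
derivatives along the coordinate axes. -/
def lap (f : ℝ × ℝ → ℝ) (p : ℝ × ℝ) : ℝ :=
  deriv (fun t => deriv (fun s => f (s, p.2)) t) p.1 +
  deriv (fun t => deriv (fun s => f (p.1, s)) t) p.2

/-- Componentwise Laplacian of a matrix-valued map on `ℝ²`. -/
def matLap (Q : ℝ × ℝ → Mat3) (p : ℝ × ℝ) : Mat3 :=
  Matrix.of fun i j => lap (fun x => Q x i j) p

/-- Squared norm of the gradient of a scalar function on `ℝ²`. -/
def gradNormSq (f : ℝ × ℝ → ℝ) (p : ℝ × ℝ) : ℝ :=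
  (fderiv ℝ f p (1, 0))^2 + (fderiv ℝ f p (0, 1))^2

/-- `|∇Q|²`: sum over all matrix entries of the squared norms of their gradients. -/
def matGradNormSq (Q : ℝ × ℝ → Mat3) (p : ℝ × ℝ) : ℝ :=
  ∑ i, ∑ j, gradNormSq (fun x => Q x i j) p

/-- Membership in the open disk of radius `R ∈ (0,∞]` centered at the origin. -/
def inBall (R : ℝ≥0∞) (x : ℝ × ℝ) : Prop :=
  ENNReal.ofReal (Real.sqrt (x.1^2 + x.2^2)) < R

/-- The right-hand side of the Euler–Lagrange equation
`ΔQ = −a²Q − b²(Q² − (1/3)|Q|²I₃) + c²|Q|²Q`. -/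
def ELrhs (a2 b2 c2 : ℝ) (A : Mat3) : Mat3 :=
  -a2 • A - b2 • (A * A - ((1/3 : ℝ) * (A * A).trace) • (1 : Mat3)) + (c2 * (A * A).trace) • A

/-- Frobenius squared norm of a 3×3 matrix. -/
def frobSq (A : Mat3) : ℝ := ∑ i, ∑ j, (A i j)^2

/-- For `x = (x₁,x₂) ∈ ℝ²`, `x̃ = (x₁,x₂,0) ∈ ℝ³`. -/
def tilde (x : ℝ × ℝ) : Fin 3 → ℝ := ![x.1, x.2, 0]

/-- The projection `P₂(x₁,x₂,x₃) = (x₁,x₂)`. -/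
def P2 (v : Fin 3 → ℝ) : ℝ × ℝ := (v 0, v 1)

/-- The antisymmetric matrix `S₀ = e₂⊗e₁ − e₁⊗e₂`. -/
def S0mat : Mat3 := vecMulVec e2 e1 - vecMulVec e1 e2

end
open Filter Topology

/-- `f` is differentiable along the coordinate axes near `p`, its partial derivatives are
differentiable along their own axis at `p`, and the Laplacian of `f` at `p` is `L`. -/
def HasLaplacianAt (f : ℝ × ℝ → ℝ) (L : ℝ) (p : ℝ × ℝ) : Prop :=
  ∃ (fx fy : ℝ × ℝ → ℝ) (a b : ℝ),
    (∀ᶠ x in 𝓝 p, HasDerivAt (fun s => f (s, x.2)) (fx x) x.1 ∧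
      HasDerivAt (fun s => f (x.1, s)) (fy x) x.2) ∧
    HasDerivAt (fun s => fx (s, p.2)) a p.1 ∧ HasDerivAt (fun s => fy (p.1, s)) b p.2 ∧ a + b = L

lemma tendsto_mk_left (x : ℝ × ℝ) : Tendsto (fun s : ℝ => (s, x.2)) (𝓝 x.1) (𝓝 x) :=
  (by fun_prop : Continuous fun s : ℝ => (s, x.2)).tendsto x.1

lemma tendsto_mk_right (x : ℝ × ℝ) : Tendsto (fun s : ℝ => (x.1, s)) (𝓝 x.2) (𝓝 x) :=
  (by fun_prop : Continuous fun s : ℝ => (x.1, s)).tendsto x.2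

namespace HasLaplacianAt

variable {f g : ℝ × ℝ → ℝ} {L M : ℝ} {p : ℝ × ℝ}

lemma lap_eq (h : HasLaplacianAt f L p) : lap f p = L := by
  obtain ⟨fx, fy, a, b, hf, ha, hb, rfl⟩ := h
  have h1 : (fun t => deriv (fun s => f (s, p.2)) t) =ᶠ[𝓝 p.1] fun s => fx (s, p.2) := by
    filter_upwards [(tendsto_mk_left p).eventually hf] with t ht using ht.1.deriv
  have h2 : (fun t => deriv (fun s => f (p.1, s)) t) =ᶠ[𝓝 p.2] fun s => fy (p.1, s) := by
    filter_upwards [(tendsto_mk_right p).eventually hf] with t ht using ht.2.deriv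
  rw [lap, h1.deriv_eq, h2.deriv_eq, ha.deriv, hb.deriv]

lemma congr (h : HasLaplacianAt f L p) (hfg : g =ᶠ[𝓝 p] f) : HasLaplacianAt g L p := by
  obtain ⟨fx, fy, a, b, hf, ha, hb, hL⟩ := h
  refine ⟨fx, fy, a, b, ?_, ha, hb, hL⟩
  filter_upwards [hf, eventually_eventually_nhds.2 hfg] with x hx hxg
  exact ⟨hx.1.congr_of_eventuallyEq ((tendsto_mk_left x).eventually hxg),
    hx.2.congr_of_eventuallyEq ((tendsto_mk_right x).eventually hxg)⟩

lemma add (hf : HasLaplacianAt f L p) (hg : HasLaplacianAt g M p) :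
    HasLaplacianAt (fun x => f x + g x) (L + M) p := by
  obtain ⟨fx, fy, a, b, hf, ha, hb, rfl⟩ := hf
  obtain ⟨gx, gy, c, d, hg, hc, hd, rfl⟩ := hg
  refine ⟨fun x => fx x + gx x, fun x => fy x + gy x, a + c, b + d, ?_, ha.add hc, hb.add hd,
    by ring⟩
  filter_upwards [hf, hg] with x hx hx'
  exact ⟨hx.1.add hx'.1, hx.2.add hx'.2⟩

end HasLaplacianAt

/-- The Euclidean norm of a point of `ℝ × ℝ`. -/
noncomputable def polarRadius (x : ℝ × ℝ) : ℝ := √(x.1 ^ 2 + x.2 ^ 2)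

/-- The branch of the polar angle on the half plane around the ray of angle `φ`. -/
noncomputable def polarAngle (φ : ℝ) (x : ℝ × ℝ) : ℝ :=
  φ + arctan ((-x.1 * sin φ + x.2 * cos φ) / (x.1 * cos φ + x.2 * sin φ))

lemma polarRadius_sq (x : ℝ × ℝ) : polarRadius x ^ 2 = x.1 ^ 2 + x.2 ^ 2 :=
  sq_sqrt (by positivity)

lemma polarRadius_polar {r : ℝ} (hr : 0 < r) (φ : ℝ) :
    polarRadius (r * cos φ, r * sin φ) = r := by
  have h : (r * cos φ) ^ 2 + (r * sin φ) ^ 2 = r ^ 2 := by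
    linear_combination r ^ 2 * sin_sq_add_cos_sq φ
  rw [polarRadius, h, sqrt_sq hr.le]

lemma polarAngle_polar (r φ : ℝ) : polarAngle φ (r * cos φ, r * sin φ) = φ := by
  have : -(r * cos φ) * sin φ + r * sin φ * cos φ = 0 := by ring
  simp only [polarAngle]
  rw [this, zero_div, arctan_zero, add_zero]

section HalfPlane

variable {φ : ℝ} {x : ℝ × ℝ}

lemma polarRadius_sq_rotated (φ : ℝ) (x : ℝ × ℝ) : polarRadius x ^ 2 =
    (x.1 * cos φ + x.2 * sin φ) ^ 2 + (-x.1 * sin φ + x.2 * cos φ) ^ 2 := by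
  rw [polarRadius_sq]
  linear_combination (-(x.1 ^ 2 + x.2 ^ 2)) * sin_sq_add_cos_sq φ

lemma polarRadius_pos (hx : 0 < x.1 * cos φ + x.2 * sin φ) : 0 < polarRadius x := by
  have h : 0 < polarRadius x ^ 2 := by
    rw [polarRadius_sq_rotated φ]; positivity
  exact (sqrt_nonneg _).lt_of_ne fun h0 => by
    rw [← show polarRadius x = √(x.1 ^ 2 + x.2 ^ 2) from rfl] at h0
    simp [← h0] at h

lemma polar_polarAngle (hx : 0 < x.1 * cos φ + x.2 * sin φ) :
    (polarRadius x * cos (polarAngle φ x), polarRadius x * sin (polarAngle φ x)) = x := by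
  have hr := polarRadius_pos hx
  have h := polarRadius_sq_rotated φ x
  set q := x.1 * cos φ + x.2 * sin φ with hq
  set v := -x.1 * sin φ + x.2 * cos φ with hv
  have hsq : √(1 + (v / q) ^ 2) = polarRadius x / q := by
    have : 1 + (v / q) ^ 2 = (polarRadius x / q) ^ 2 := by
      field_simp
      exact h.symm
    rw [this, sqrt_sq (by positivity)]
  have hc : polarRadius x * cos (arctan (v / q)) = q := by
    rw [cos_arctan, hsq]; field_simp
  have hs : polarRadius x * sin (arctan (v / q)) = v := by
    rw [sin_arctan, hsq]; field_simp
  ext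
  · simp only [polarAngle, ← hq, ← hv, cos_add]
    linear_combination cos φ * hc - sin φ * hs + cos φ * hq - sin φ * hv
      + x.1 * sin_sq_add_cos_sq φ
  · simp only [polarAngle, ← hq, ← hv, sin_add]
    linear_combination sin φ * hc + cos φ * hs + sin φ * hq + cos φ * hv
      + x.2 * sin_sq_add_cos_sq φ

lemma hasDerivAt_polarRadius_left (hx : 0 < polarRadius x) :
    HasDerivAt (fun s => polarRadius (s, x.2)) (x.1 / polarRadius x) x.1 := by
  have h0 : x.1 ^ 2 + x.2 ^ 2 ≠ 0 := by rw [← polarRadius_sq]; positivity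
  refine (((hasDerivAt_pow 2 x.1).add_const (x.2 ^ 2)).sqrt h0).congr_deriv ?_
  rw [← show polarRadius x = √(x.1 ^ 2 + x.2 ^ 2) from rfl]
  norm_num
  field_simp

lemma hasDerivAt_polarRadius_right (hx : 0 < polarRadius x) :
    HasDerivAt (fun s => polarRadius (x.1, s)) (x.2 / polarRadius x) x.2 := by
  have h0 : x.1 ^ 2 + x.2 ^ 2 ≠ 0 := by rw [← polarRadius_sq]; positivity
  refine (((hasDerivAt_pow 2 x.2).const_add (x.1 ^ 2)).sqrt h0).congr_deriv ?_
  rw [← show polarRadius x = √(x.1 ^ 2 + x.2 ^ 2) from rfl]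
  norm_num
  field_simp

lemma hasDerivAt_polarAngle_left (hx : 0 < x.1 * cos φ + x.2 * sin φ) :
    HasDerivAt (fun s => polarAngle φ (s, x.2)) (-x.2 / polarRadius x ^ 2) x.1 := by
  have hv : HasDerivAt (fun s => -s * sin φ + x.2 * cos φ) (-1 * sin φ) x.1 :=
    ((hasDerivAt_id x.1).neg.mul_const _).add_const _
  have hq : HasDerivAt (fun s => s * cos φ + x.2 * sin φ) (1 * cos φ) x.1 :=
    ((hasDerivAt_id x.1).mul_const _).add_const _
  refine (((hv.div hq hx.ne').arctan).const_add φ).congr_deriv ?_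
  have hr := polarRadius_pos hx
  have h := polarRadius_sq_rotated φ x
  generalize hqx : x.1 * cos φ + x.2 * sin φ = q at *
  generalize hvx : -x.1 * sin φ + x.2 * cos φ = v at *
  have h1 : 1 + (v / q) ^ 2 = polarRadius x ^ 2 / q ^ 2 := by
    rw [h]; field_simp
  simp only [Pi.div_apply, hqx, hvx]
  rw [h1]
  field_simp
  rw [← hqx, ← hvx]
  linear_combination (-x.2) * sin_sq_add_cos_sq φ

lemma hasDerivAt_polarAngle_right (hx : 0 < x.1 * cos φ + x.2 * sin φ) :
    HasDerivAt (fun s => polarAngle φ (x.1, s)) (x.1 / polarRadius x ^ 2) x.2 := by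
  have hv : HasDerivAt (fun s => -x.1 * sin φ + s * cos φ) (1 * cos φ) x.2 :=
    ((hasDerivAt_id x.2).mul_const _).const_add _
  have hq : HasDerivAt (fun s => x.1 * cos φ + s * sin φ) (1 * sin φ) x.2 :=
    ((hasDerivAt_id x.2).mul_const _).const_add _
  refine (((hv.div hq hx.ne').arctan).const_add φ).congr_deriv ?_
  have hr := polarRadius_pos hx
  have h := polarRadius_sq_rotated φ x
  generalize hqx : x.1 * cos φ + x.2 * sin φ = q at *
  generalize hvx : -x.1 * sin φ + x.2 * cos φ = v at *
  have h1 : 1 + (v / q) ^ 2 = polarRadius x ^ 2 / q ^ 2 := by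
    rw [h]; field_simp
  simp only [Pi.div_apply, hqx, hvx]
  rw [h1]
  field_simp
  rw [← hqx, ← hvx]
  linear_combination x.1 * sin_sq_add_cos_sq φ

end HalfPlane

/-- First derivative of `u(r) ψ(θ)` along a line on which `r' = t / r` and `θ' = m / r²`. -/
lemma hasDerivAt_radial_mul_angular {u ψ r θ : ℝ → ℝ} {u₁ ψ₁ t m : ℝ}
    (hu : HasDerivAt u u₁ (r t)) (hψ : HasDerivAt ψ ψ₁ (θ t))
    (hr : HasDerivAt r (t / r t) t) (hθ : HasDerivAt θ (m / r t ^ 2) t) :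
    HasDerivAt (fun s => u (r s) * ψ (θ s))
      (u₁ * (t / r t) * ψ (θ t) + u (r t) * (ψ₁ * (m / r t ^ 2))) t :=
  (hu.comp t hr).mul (hψ.comp t hθ)

/-- Second derivative of `u(r) ψ(θ)` along a line on which `r' = t / r` and `θ' = m / r²`. -/
lemma hasDerivAt_deriv_radial_mul_angular {u u₁ ψ ψ₁ r θ : ℝ → ℝ} {u₂ ψ₂ t m : ℝ}
    (hu : HasDerivAt u (u₁ (r t)) (r t)) (hu₁ : HasDerivAt u₁ u₂ (r t))
    (hψ : HasDerivAt ψ (ψ₁ (θ t)) (θ t)) (hψ₁ : HasDerivAt ψ₁ ψ₂ (θ t))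
    (h0 : 0 < r t) (hr : HasDerivAt r (t / r t) t) (hθ : HasDerivAt θ (m / r t ^ 2) t) :
    HasDerivAt (fun s => u₁ (r s) * (s / r s) * ψ (θ s) + u (r s) * (ψ₁ (θ s) * (m / r s ^ 2)))
      (u₂ * t ^ 2 / r t ^ 2 * ψ (θ t) + u₁ (r t) * (1 / r t - t ^ 2 / r t ^ 3) * ψ (θ t)
        + 2 * u₁ (r t) * t * m / r t ^ 3 * ψ₁ (θ t) - 2 * u (r t) * t * m / r t ^ 4 * ψ₁ (θ t)
        + u (r t) * m ^ 2 / r t ^ 4 * ψ₂) t := by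
  have h1 := ((hu₁.comp t hr).mul ((hasDerivAt_id t).div hr h0.ne')).mul (hψ.comp t hθ)
  have h2 := (hu.comp t hr).mul
    ((hψ₁.comp t hθ).mul ((hasDerivAt_const t m).div (hr.pow 2) (pow_ne_zero 2 h0.ne')))
  refine (h1.add h2).congr_deriv ?_
  simp only [Function.comp_apply, Pi.mul_apply, Pi.div_apply, Pi.pow_apply, id]
  field_simp
  ring

/-- The Laplacian in polar coordinates of `u(r) ψ(θ)` with `ψ'' = -κ² ψ`. -/
lemma hasLaplacianAt_radial_mul_angular {u u₁ ψ ψ₁ : ℝ → ℝ} {u₂ κ r φ : ℝ} (hr : 0 < r)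
    (hu : ∀ᶠ ρ in 𝓝 r, HasDerivAt u (u₁ ρ) ρ) (hu₁ : HasDerivAt u₁ u₂ r)
    (hψ : ∀ θ, HasDerivAt ψ (ψ₁ θ) θ) (hψ₁ : ∀ θ, HasDerivAt ψ₁ (-κ ^ 2 * ψ θ) θ) :
    HasLaplacianAt (fun x => u (polarRadius x) * ψ (polarAngle φ x))
      ((u₂ + u₁ r / r - κ ^ 2 * u r / r ^ 2) * ψ φ) (r * cos φ, r * sin φ) := by
  obtain ⟨p, hp⟩ : ∃ p : ℝ × ℝ, p = (r * cos φ, r * sin φ) := ⟨_, rfl⟩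
  rw [← hp]
  have hrp : polarRadius p = r := by rw [hp, polarRadius_polar hr φ]
  have hθp : polarAngle φ p = φ := by rw [hp, polarAngle_polar r φ]
  have hhalf : 0 < p.1 * cos φ + p.2 * sin φ := by
    have : p.1 * cos φ + p.2 * sin φ = r := by
      simp only [hp]; linear_combination r * sin_sq_add_cos_sq φ
    rwa [this]
  have hev : ∀ᶠ x : ℝ × ℝ in 𝓝 p, 0 < x.1 * cos φ + x.2 * sin φ :=
    (by fun_prop : Continuous fun x : ℝ × ℝ => x.1 * cos φ + x.2 * sin φ).continuousAt.eventually
      (lt_mem_nhds hhalf)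
  have hcont : ContinuousAt polarRadius p := by unfold polarRadius; fun_prop
  have huev : ∀ᶠ x in 𝓝 p, HasDerivAt u (u₁ (polarRadius x)) (polarRadius x) :=
    hcont.eventually (by rwa [hrp])
  have hup := huev.self_of_nhds
  have hpos : 0 < polarRadius p := by rwa [hrp]
  have hu₁p : HasDerivAt u₁ u₂ (polarRadius p) := by rwa [hrp]
  refine ⟨fun x => u₁ (polarRadius x) * (x.1 / polarRadius x) * ψ (polarAngle φ x)
      + u (polarRadius x) * (ψ₁ (polarAngle φ x) * (-x.2 / polarRadius x ^ 2)),
    fun x => u₁ (polarRadius x) * (x.2 / polarRadius x) * ψ (polarAngle φ x)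
      + u (polarRadius x) * (ψ₁ (polarAngle φ x) * (x.1 / polarRadius x ^ 2)), _, _, ?_,
    hasDerivAt_deriv_radial_mul_angular (r := fun s => polarRadius (s, p.2))
      (θ := fun s => polarAngle φ (s, p.2)) hup hu₁p (hψ _) (hψ₁ _) hpos
      (hasDerivAt_polarRadius_left hpos) (hasDerivAt_polarAngle_left hhalf),
    hasDerivAt_deriv_radial_mul_angular (r := fun s => polarRadius (p.1, s))
      (θ := fun s => polarAngle φ (p.1, s)) hup hu₁p (hψ _) (hψ₁ _) hpos
      (hasDerivAt_polarRadius_right hpos) (hasDerivAt_polarAngle_right hhalf), ?_⟩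
  · filter_upwards [hev, huev] with x hx hux
    have hx' := polarRadius_pos hx
    exact ⟨hasDerivAt_radial_mul_angular (r := fun s => polarRadius (s, x.2))
        (θ := fun s => polarAngle φ (s, x.2)) hux (hψ _)
        (hasDerivAt_polarRadius_left hx') (hasDerivAt_polarAngle_left hx),
      hasDerivAt_radial_mul_angular (r := fun s => polarRadius (x.1, s))
        (θ := fun s => polarAngle φ (x.1, s)) hux (hψ _)
        (hasDerivAt_polarRadius_right hx') (hasDerivAt_polarAngle_right hx)⟩
  · have hsq : p.2 ^ 2 = r ^ 2 - p.1 ^ 2 := by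
      rw [← hrp, polarRadius_sq]; ring
    simp only [Prod.mk.eta, hrp, hθp]
    rw [neg_sq, hsq]
    field_simp
    ring

lemma E0_eq : E0 = (√6)⁻¹ • !![-1, 0, 0; 0, -1, 0; 0, 0, 2] := by
  have h : √(3 / 2) = 3 * (√6)⁻¹ := by
    have : (3 / 2 : ℝ) = (3 * (√6)⁻¹) ^ 2 := by
      rw [mul_pow, inv_pow, sq_sqrt (by norm_num)]
      norm_num
    rw [this, sqrt_sq (by positivity)]
  ext i j
  fin_cases i <;> fin_cases j <;> simp [E0, e3, vecMulVec, h] <;> ring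

/-- The value of `E₁` at angle `0`. -/
noncomputable def E1zero : Mat3 := (√2)⁻¹ • !![1, 0, 0; 0, -1, 0; 0, 0, 0]

/-- The value of `E₂` at angle `0`. -/
noncomputable def E2zero : Mat3 := (√2)⁻¹ • !![0, 1, 0; 1, 0, 0; 0, 0, 0]

lemma sqrt_two_eq : √2 = 2 * (√2)⁻¹ := by
  have := sq_sqrt (show (0 : ℝ) ≤ 2 by norm_num)
  field_simp
  linarith

lemma E1_eq (k : ℤ) (φ : ℝ) : E1 k φ = cos (k * φ) • E1zero + sin (k * φ) • E2zero := by
  have hc : cos (k * φ) = 2 * cos (k * φ / 2) ^ 2 - 1 := by rw [← cos_two_mul]; ring_nf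
  have hs : sin (k * φ) = 2 * sin (k * φ / 2) * cos (k * φ / 2) := by rw [← sin_two_mul]; ring_nf
  have h1 := sin_sq_add_cos_sq (k * φ / 2)
  have h2 := sqrt_two_eq
  rw [E1, h2, hc, hs]
  ext i j
  fin_cases i <;> fin_cases j <;>
    simp [E1zero, E2zero, e3, I2, nvec, vecMulVec] <;> grind

lemma E2mat_eq (k : ℤ) (φ : ℝ) : E2mat k φ = cos (k * φ) • E2zero - sin (k * φ) • E1zero := by
  have hc : cos (k * φ) = 2 * cos (k * φ / 2) ^ 2 - 1 := by rw [← cos_two_mul]; ring_nf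
  have hs : sin (k * φ) = 2 * sin (k * φ / 2) * cos (k * φ / 2) := by rw [← sin_two_mul]; ring_nf
  have h1 := sin_sq_add_cos_sq (k * φ / 2)
  rw [E2mat, hc, hs]
  ext i j
  fin_cases i <;> fin_cases j <;>
    simp [E1zero, E2zero, nvec, mvec, vecMulVec] <;> grind

lemma ELrhs_combination (a2 b2 c2 : ℝ) (k : ℤ) (φ x y z : ℝ) :
    ELrhs a2 b2 c2 (x • E0 + y • E1 k φ + z • E2mat k φ) =
      (x * (-a2 + c2 * (x ^ 2 + y ^ 2 + z ^ 2) - (b2 / √6) * x)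
        + (b2 / √6) * (y ^ 2 + z ^ 2)) • E0
      + (y * (-a2 + c2 * (x ^ 2 + y ^ 2 + z ^ 2) + (2 * b2 / √6) * x)) • E1 k φ
      + (z * (-a2 + c2 * (x ^ 2 + y ^ 2 + z ^ 2) + (2 * b2 / √6) * x)) • E2mat k φ := by
  have h2 : (√2)⁻¹ ^ 2 = 1 / 2 := by rw [inv_pow, sq_sqrt (by norm_num)]; norm_num
  have h6 : (√6)⁻¹ ^ 2 = 1 / 6 := by rw [inv_pow, sq_sqrt (by norm_num)]; norm_num
  have hcs := sin_sq_add_cos_sq (k * φ)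
  rw [E0_eq, E1_eq, E2mat_eq]
  simp only [div_eq_mul_inv _ √6]
  unfold E1zero E2zero
  generalize (√2)⁻¹ = s at *
  generalize (√6)⁻¹ = t at *
  generalize cos (k * φ) = C at *
  generalize sin (k * φ) = S at *
  ext i j
  fin_cases i <;> fin_cases j <;>
    simp [ELrhs, Fin.sum_univ_three, Matrix.trace] <;> grind

lemma combination_at_zero_injective {k : ℤ} {x y z x' y' z' : ℝ}
    (h : x • E0 + y • E1 k 0 + z • E2mat k 0 = x' • E0 + y' • E1 k 0 + z' • E2mat k 0) :
    x = x' ∧ y = y' ∧ z = z' := by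
  rw [E0_eq, E1_eq, E2mat_eq] at h
  have h00 := congrFun (congrFun h 0) 0
  have h01 := congrFun (congrFun h 0) 1
  have h22 := congrFun (congrFun h 2) 2
  simp [E1zero, E2zero] at h00 h01 h22
  subst h22
  simp at h00
  exact ⟨rfl, h00, h01⟩

lemma hasDerivAt_cos_add_sin (κ A B θ : ℝ) :
    HasDerivAt (fun θ => A * cos (κ * θ) + B * sin (κ * θ))
      (κ * B * cos (κ * θ) + (-κ * A) * sin (κ * θ)) θ := by
  have h : HasDerivAt (fun θ => κ * θ) κ θ := by simpa using (hasDerivAt_id θ).const_mul κ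
  refine ((h.cos.const_mul A).add (h.sin.const_mul B)).congr_deriv ?_
  ring

/-- The matrix Laplacian of `w₀ E₀ + w₁ E₁ + w₂ E₂` in polar coordinates. -/
lemma matLap_polar {k : ℤ} {R : ℝ≥0∞} {w₀ w₁ w₂ : ℝ → ℝ}
    (hw₀ : ContDiffOn ℝ 2 w₀ {r : ℝ | 0 < r ∧ ENNReal.ofReal r < R})
    (hw₁ : ContDiffOn ℝ 2 w₁ {r : ℝ | 0 < r ∧ ENNReal.ofReal r < R})
    (hw₂ : ContDiffOn ℝ 2 w₂ {r : ℝ | 0 < r ∧ ENNReal.ofReal r < R})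
    {Q : ℝ × ℝ → Mat3}
    (hQ : ∀ r φ : ℝ, 0 < r → ENNReal.ofReal r < R →
      Q (r * Real.cos φ, r * Real.sin φ) = w₀ r • E0 + w₁ r • E1 k φ + w₂ r • E2mat k φ)
    {r : ℝ} (φ : ℝ) (hr : 0 < r) (hrR : ENNReal.ofReal r < R) :
    matLap Q (r * cos φ, r * sin φ) =
      (deriv (deriv w₀) r + deriv w₀ r / r) • E0
      + (deriv (deriv w₁) r + deriv w₁ r / r - (k : ℝ) ^ 2 * w₁ r / r ^ 2) • E1 k φ
      + (deriv (deriv w₂) r + deriv w₂ r / r - (k : ℝ) ^ 2 * w₂ r / r ^ 2) • E2mat k φ := by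
  have hopen : IsOpen {r : ℝ | 0 < r ∧ ENNReal.ofReal r < R} :=
    (isOpen_lt continuous_const continuous_id).inter
      (isOpen_lt ENNReal.continuous_ofReal continuous_const)
  have hmem : {r : ℝ | 0 < r ∧ ENNReal.ofReal r < R} ∈ 𝓝 r := hopen.mem_nhds ⟨hr, hrR⟩
  have hd {w : ℝ → ℝ} (hw : ContDiffOn ℝ 2 w {r : ℝ | 0 < r ∧ ENNReal.ofReal r < R}) :
      (∀ᶠ ρ in 𝓝 r, HasDerivAt w (deriv w ρ) ρ) ∧
        HasDerivAt (deriv w) (deriv (deriv w) r) r := by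
    constructor
    · filter_upwards [hmem] with ρ hρ
      exact ((hw.contDiffAt (hopen.mem_nhds hρ)).differentiableAt (by norm_num)).hasDerivAt
    · have h1 : ContDiffOn ℝ 1 (deriv w) _ := hw.deriv_of_isOpen hopen (by norm_num)
      exact ((h1.contDiffAt hmem).differentiableAt (by norm_num)).hasDerivAt
  have hrad : polarRadius (r * cos φ, r * sin φ) = r := polarRadius_polar hr φ
  have hev : ∀ᶠ x : ℝ × ℝ in 𝓝 (r * cos φ, r * sin φ), 0 < x.1 * cos φ + x.2 * sin φ := by
    refine (by fun_prop : Continuous fun x : ℝ × ℝ =>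
      x.1 * cos φ + x.2 * sin φ).continuousAt.eventually (lt_mem_nhds ?_)
    have : r * cos φ * cos φ + r * sin φ * sin φ = r := by
      linear_combination r * sin_sq_add_cos_sq φ
    simpa only [this]
  have hcont : ContinuousAt polarRadius (r * cos φ, r * sin φ) := by
    unfold polarRadius; fun_prop
  have hevR : ∀ᶠ x in 𝓝 (r * cos φ, r * sin φ),
      polarRadius x ∈ {r : ℝ | 0 < r ∧ ENNReal.ofReal r < R} :=
    hcont (by rwa [hrad])
  have hlap (w : ℝ → ℝ) (hw : ContDiffOn ℝ 2 w {r : ℝ | 0 < r ∧ ENNReal.ofReal r < R})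
      (κ A B : ℝ) := hasLaplacianAt_radial_mul_angular (κ := κ) (φ := φ) hr (hd hw).1 (hd hw).2
        (hasDerivAt_cos_add_sin κ A B) fun θ =>
          (hasDerivAt_cos_add_sin κ (κ * B) (-κ * A) θ).congr_deriv (by ring)
  ext i j
  have key := ((hlap w₀ hw₀ 0 (E0 i j) 0).add (hlap w₁ hw₁ k (E1zero i j) (E2zero i j))).add
    (hlap w₂ hw₂ k (E2zero i j) (-E1zero i j))
  rw [matLap, Matrix.of_apply, (key.congr (g := fun x => Q x i j) ?_).lap_eq]
  · simp [E1_eq, E2mat_eq]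
    ring
  · filter_upwards [hev, hevR] with x hx hxR
    have := hQ _ (polarAngle φ x) hxR.1 hxR.2
    rw [polar_polarAngle hx] at this
    simp [this, E1_eq, E2mat_eq]
    ring

/-- equivalence between the Euler–Lagrange PDE and the ODE system for
maps of the form `Q = w₀(r)E₀ + w₁(r)E₁(φ) + w₂(r)E₂(φ)` on `B_R∖{0}`. -/
theorem stmt1 (a2 b2 c2 : ℝ) (ha : 0 < a2) (hb : 0 < b2) (hc : 0 < c2)
    (k : ℤ) (hk : k ≠ 0) (R : ℝ≥0∞) (hR : 0 < R)
    (w₀ w₁ w₂ : ℝ → ℝ)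
    (hw₀ : ContDiffOn ℝ 2 w₀ {r : ℝ | 0 < r ∧ ENNReal.ofReal r < R})
    (hw₁ : ContDiffOn ℝ 2 w₁ {r : ℝ | 0 < r ∧ ENNReal.ofReal r < R})
    (hw₂ : ContDiffOn ℝ 2 w₂ {r : ℝ | 0 < r ∧ ENNReal.ofReal r < R})
    (Q : ℝ × ℝ → Mat3)
    (hQ : ∀ r φ : ℝ, 0 < r → ENNReal.ofReal r < R →
      Q (r * Real.cos φ, r * Real.sin φ) = w₀ r • E0 + w₁ r • E1 k φ + w₂ r • E2mat k φ) :
    (∀ x : ℝ × ℝ, x ≠ 0 → inBall R x → matLap Q x = ELrhs a2 b2 c2 (Q x)) ↔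
    (∀ r : ℝ, 0 < r → ENNReal.ofReal r < R →
      (deriv (deriv w₀) r + deriv w₀ r / r =
        w₀ r * (-a2 + c2 * ((w₀ r)^2 + (w₁ r)^2 + (w₂ r)^2) - (b2 / Real.sqrt 6) * w₀ r)
          + (b2 / Real.sqrt 6) * ((w₁ r)^2 + (w₂ r)^2)) ∧
      (deriv (deriv w₁) r + deriv w₁ r / r - (k : ℝ)^2 * w₁ r / r^2 =
        w₁ r * (-a2 + c2 * ((w₀ r)^2 + (w₁ r)^2 + (w₂ r)^2) + (2 * b2 / Real.sqrt 6) * w₀ r)) ∧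
      (deriv (deriv w₂) r + deriv w₂ r / r - (k : ℝ)^2 * w₂ r / r^2 =
        w₂ r * (-a2 + c2 * ((w₀ r)^2 + (w₁ r)^2 + (w₂ r)^2) + (2 * b2 / Real.sqrt 6) * w₀ r))) := by
  constructor
  · intro h r hr hrR
    have hrad : polarRadius (r * cos 0, r * sin 0) = r := polarRadius_polar hr 0
    have h1 := h (r * cos 0, r * sin 0) (by simp [hr.ne'])
      (show ENNReal.ofReal (polarRadius _) < R by rwa [hrad])
    rw [matLap_polar hw₀ hw₁ hw₂ hQ 0 hr hrR, hQ r 0 hr hrR, ELrhs_combination] at h1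
    exact combination_at_zero_injective h1
  · intro h x hx hxR
    obtain ⟨r, φ, hr, rfl⟩ : ∃ r φ : ℝ, 0 < r ∧ x = (r * cos φ, r * sin φ) := by
      refine ⟨‖Complex.mk x.1 x.2‖, Complex.arg ⟨x.1, x.2⟩, norm_pos_iff.2 fun h0 => hx ?_, ?_⟩
      · exact Prod.ext (congrArg Complex.re h0) (congrArg Complex.im h0)
      · rw [Complex.norm_mul_cos_arg, Complex.norm_mul_sin_arg]
    have hrR : ENNReal.ofReal r < R := by
      have : ENNReal.ofReal (polarRadius _) < R := hxR
      rwa [polarRadius_polar hr φ] at this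
    obtain ⟨h0, h1, h2⟩ := h r hr hrR
    rw [matLap_polar hw₀ hw₁ hw₂ hQ φ hr hrR, hQ r φ hr hrR, ELrhs_combination, h0, h1, h2]
end

section
/- Let a²,b²,c² > 0 and k ∈ ℤ∖{0}. There exist functions u ∈ C²([0,∞)) ∩ C^∞((0,∞)) and v ∈ C^∞([0,∞)) satisfying on (0,∞) the ODE system u'' + u'/r − k²u/r² = u[−a² + √(2/3)·b²v + c²(u² + v²)] and v'' + v'/r = v[−a² − (1/√6)b²v + c²(u² + v²)] + (1/√6)b²u², together with the boundary conditions u(0) = 0, v'(0) = 0, lim_{r→∞} u(r) = s₊/√2, lim_{r→∞} v(r) = −s₊/√6, and moreover u(r) > 0 and v(r) < 0 for all r ∈ (0,∞). -/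
open Real Matrix
open scoped ENNReal

section

open MeasureTheory Set Filter Topology

/-! ### Weighted radial means -/

/-- The weighted mean `∫₀¹ tᵉ g(st) dt`. -/
noncomputable def weightedMean (e : ℕ) (g : ℝ → ℝ) (s : ℝ) : ℝ :=
  ∫ t in (0:ℝ)..1, t ^ e * g (s * t)

lemma continuous_weightedMean (e : ℕ) {g : ℝ → ℝ} (hg : Continuous g) :
    Continuous (weightedMean e g) := by
  unfold weightedMean
  apply intervalIntegral.continuous_parametric_intervalIntegral_of_continuous'
  fun_prop

lemma hasDerivAt_weightedMean (e : ℕ) {g : ℝ → ℝ} (hg : ContDiff ℝ 1 g) (s : ℝ) :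
    HasDerivAt (weightedMean e g) (weightedMean (e + 1) (deriv g) s) s := by
  have hg' : Continuous (deriv g) := hg.continuous_deriv le_rfl
  have hgc := hg.continuous
  obtain ⟨M, hM⟩ := (isCompact_Icc (a := -(|s| + 1)) (b := |s| + 1)).exists_bound_of_continuousOn
    hg'.continuousOn
  refine (intervalIntegral.hasDerivAt_integral_of_dominated_loc_of_deriv_le
    (F' := fun x t => t ^ (e + 1) * deriv g (x * t)) (bound := fun _ => M)
    (Metric.ball_mem_nhds s one_pos) ?_ ?_ ?_ ?_ ?_ ?_).2
  · filter_upwards with x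
    exact (by fun_prop : Continuous fun t => t ^ e * g (x * t)).aestronglyMeasurable
  · exact (by fun_prop : Continuous fun t => t ^ e * g (s * t)).intervalIntegrable _ _
  · exact (by fun_prop : Continuous fun t => t ^ (e + 1) * deriv g (s * t)).aestronglyMeasurable
  · filter_upwards with t ht x hx
    rw [uIoc_of_le zero_le_one] at ht
    have hx' : |x| ≤ |s| + 1 := by
      have h1 := abs_sub_abs_le_abs_sub x s
      rw [Metric.mem_ball, Real.dist_eq] at hx
      linarith
    have hxt : |x * t| ≤ |s| + 1 := by
      rw [abs_mul, abs_of_pos ht.1]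
      nlinarith [abs_nonneg x, ht.2, ht.1]
    have h2 := hM _ (abs_le.1 hxt)
    rw [norm_mul, norm_pow, Real.norm_of_nonneg ht.1.le]
    calc t ^ (e + 1) * ‖deriv g (x * t)‖ ≤ 1 * M :=
          mul_le_mul (pow_le_one₀ ht.1.le ht.2) h2 (norm_nonneg _) zero_le_one
      _ = M := one_mul M
  · exact intervalIntegrable_const
  · filter_upwards with t _ x _
    have h1 : HasDerivAt g (deriv g (x * t)) (x * t) :=
      (hg.differentiable one_ne_zero _).hasDerivAt
    have h2 := (h1.comp x ((hasDerivAt_id x).mul_const t)).const_mul (t ^ e)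
    have h3 : t ^ e * (deriv g (x * t) * (1 * t)) = t ^ (e + 1) * deriv g (x * t) := by ring
    exact h3 ▸ h2

lemma contDiff_weightedMean (m : ℕ) :
    ∀ (e : ℕ) {g : ℝ → ℝ}, ContDiff ℝ m g → ContDiff ℝ m (weightedMean e g) := by
  induction m with
  | zero =>
    intro e g hg
    exact contDiff_zero.2 (continuous_weightedMean e hg.continuous)
  | succ m ih =>
    intro e g hg
    have h1 : ContDiff ℝ 1 g := hg.of_le (by exact_mod_cast Nat.succ_le_succ (Nat.zero_le m))
    push_cast at hg ⊢
    refine contDiff_succ_iff_deriv.2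
      ⟨fun s => (hasDerivAt_weightedMean e h1 s).differentiableAt, by simp, ?_⟩
    rw [funext fun s => (hasDerivAt_weightedMean e h1 s).deriv]
    exact ih _ (contDiff_succ_iff_deriv.1 hg).2.2

lemma pow_mul_weightedMean (e : ℕ) (g : ℝ → ℝ) (s : ℝ) :
    s ^ (e + 1) * weightedMean e g s = ∫ τ in (0:ℝ)..s, τ ^ e * g τ := by
  have h := intervalIntegral.mul_integral_comp_mul_left (a := 0) (b := 1)
    (f := fun τ => τ ^ e * g τ) s
  rw [mul_zero, mul_one] at h
  rw [← h, weightedMean, pow_succ', mul_assoc, ← intervalIntegral.integral_const_mul]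
  congr 2
  ext t
  ring

lemma measurable_weightedMean (e : ℕ) {g : ℝ → ℝ} (hg : Measurable g) :
    Measurable (weightedMean e g) := by
  unfold weightedMean
  simp_rw [intervalIntegral.integral_of_le zero_le_one]
  apply StronglyMeasurable.measurable
  apply StronglyMeasurable.integral_prod_right
  apply Measurable.stronglyMeasurable
  unfold Function.uncurry
  fun_prop

lemma weightedMean_neg_of_even (e : ℕ) {g : ℝ → ℝ} (hg : ∀ x, g (-x) = g x) (s : ℝ) :
    weightedMean e g (-s) = weightedMean e g s := by
  simp [weightedMean, neg_mul, hg]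

/-! ### The inverse of a radial Schrödinger operator -/

/-- The functions to which the solution operator is applied. -/
def QuadraticGrowth (M : ℝ) (h : ℝ → ℝ) : Prop :=
  Measurable h ∧ ∀ x, |h x| ≤ M * (1 + x ^ 2)

/-- The radial derivative density of the solution operator. -/
noncomputable def fluxDensity (e : ℕ) (h : ℝ → ℝ) (s : ℝ) : ℝ :=
  s * Real.exp (-s ^ 2) * weightedMean e (fun x => Real.exp (x ^ 2 / 2) * h x) s

/-- The solution operator of the equation with singular drift coefficient `e` and potential
`r² + e + 1`. -/
noncomputable def radialInverse (e : ℕ) (h : ℝ → ℝ) (r : ℝ) : ℝ :=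
  Real.exp (r ^ 2 / 2) * ∫ s in Ioi |r|, fluxDensity e h s

/-- An integrable majorant of the flux densities. -/
noncomputable def fluxMajorant (M s : ℝ) : ℝ :=
  M * (|s| * (1 + s ^ 2) * Real.exp (-s ^ 2 / 2))

lemma integrable_fluxMajorant (M : ℝ) : Integrable (fluxMajorant M) := by
  have h1 := integrable_rpow_mul_exp_neg_mul_sq (b := 1 / 2) (by norm_num) (s := 1) (by norm_num)
  have h3 := integrable_rpow_mul_exp_neg_mul_sq (b := 1 / 2) (by norm_num) (s := 3) (by norm_num)
  have h := ((h1.norm.add h3.norm)).const_mul M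
  refine h.congr (ae_of_all _ fun s => ?_)
  have e3 : s ^ (3 : ℝ) = s ^ 3 := by exact_mod_cast Real.rpow_natCast s 3
  simp only [Pi.add_apply, Real.rpow_one, norm_mul, e3, Real.norm_eq_abs, abs_pow, Real.abs_exp,
    fluxMajorant]
  rw [show -(1 / 2) * s ^ 2 = -s ^ 2 / 2 by ring, ← sq_abs s]
  ring

variable {e : ℕ} {M : ℝ} {h h' : ℝ → ℝ}

lemma QuadraticGrowth.nonneg (hh : QuadraticGrowth M h) : 0 ≤ M := by
  have := (abs_nonneg _).trans (hh.2 0)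
  simpa using this

lemma QuadraticGrowth.abs_le {s t : ℝ} (hh : QuadraticGrowth M h) (ht : t ∈ Ioc (0:ℝ) 1) :
    ‖t ^ e * (Real.exp ((s * t) ^ 2 / 2) * h (s * t))‖ ≤
      M * (1 + s ^ 2) * Real.exp (s ^ 2 / 2) := by
  have hM := hh.nonneg
  have h1 : (s * t) ^ 2 ≤ s ^ 2 := by
    rw [mul_pow]
    exact mul_le_of_le_one_right (sq_nonneg s) (pow_le_one₀ ht.1.le ht.2)
  rw [norm_mul, norm_pow, Real.norm_of_nonneg ht.1.le, norm_mul, Real.norm_eq_abs,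
    Real.norm_eq_abs, Real.abs_exp]
  have h2 : |h (s * t)| ≤ M * (1 + s ^ 2) :=
    (hh.2 _).trans (mul_le_mul_of_nonneg_left (by linarith) hM)
  calc t ^ e * (Real.exp ((s * t) ^ 2 / 2) * |h (s * t)|)
      ≤ 1 * (Real.exp (s ^ 2 / 2) * (M * (1 + s ^ 2))) := by
        gcongr
        exact pow_le_one₀ ht.1.le ht.2
    _ = _ := by ring

lemma QuadraticGrowth.intervalIntegrable (hh : QuadraticGrowth M h) (s : ℝ) :
    IntervalIntegrable (fun t => t ^ e * (Real.exp ((s * t) ^ 2 / 2) * h (s * t)))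
      volume 0 1 := by
  have hm := hh.1
  rw [intervalIntegrable_iff_integrableOn_Ioc_of_le zero_le_one]
  refine Measure.integrableOn_of_bounded (M := M * (1 + s ^ 2) * Real.exp (s ^ 2 / 2)) (by simp)
    (Measurable.aestronglyMeasurable (by fun_prop)) ?_
  exact (ae_restrict_iff' measurableSet_Ioc).2 (ae_of_all _ fun t ht => hh.abs_le ht)

lemma QuadraticGrowth.measurable_fluxDensity (hh : QuadraticGrowth M h) :
    Measurable (fluxDensity e h) := by
  have hm := hh.1
  have := measurable_weightedMean e (g := fun x => Real.exp (x ^ 2 / 2) * h x) (by fun_prop)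
  unfold fluxDensity
  fun_prop

lemma QuadraticGrowth.abs_fluxDensity_le (hh : QuadraticGrowth M h) (s : ℝ) :
    ‖fluxDensity e h s‖ ≤ fluxMajorant M s := by
  have h1 : ‖weightedMean e (fun x => Real.exp (x ^ 2 / 2) * h x) s‖ ≤
      M * (1 + s ^ 2) * Real.exp (s ^ 2 / 2) * |1 - 0| := by
    apply intervalIntegral.norm_integral_le_of_norm_le_const
    intro t ht
    rw [uIoc_of_le zero_le_one] at ht
    exact hh.abs_le ht
  rw [fluxDensity, norm_mul, norm_mul, Real.norm_eq_abs (Real.exp _), Real.abs_exp,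
    Real.norm_eq_abs s]
  calc |s| * Real.exp (-s ^ 2) * _ ≤ |s| * Real.exp (-s ^ 2) *
        (M * (1 + s ^ 2) * Real.exp (s ^ 2 / 2) * |1 - 0|) := by gcongr
    _ = M * (|s| * (1 + s ^ 2) * (Real.exp (-s ^ 2) * Real.exp (s ^ 2 / 2))) := by simp; ring
    _ = _ := by
        rw [← Real.exp_add, fluxMajorant]
        ring_nf

lemma QuadraticGrowth.integrable_fluxDensity (hh : QuadraticGrowth M h) :
    Integrable (fluxDensity e h) :=
  (integrable_fluxMajorant M).mono' hh.measurable_fluxDensity.aestronglyMeasurable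
    (ae_of_all _ hh.abs_fluxDensity_le)

lemma fluxDensity_mono (hh : QuadraticGrowth M h) {M' : ℝ} (hh' : QuadraticGrowth M' h')
    (hle : ∀ x, 0 ≤ x → h x ≤ h' x) {s : ℝ} (hs : 0 ≤ s) :
    fluxDensity e h s ≤ fluxDensity e h' s := by
  unfold fluxDensity
  refine mul_le_mul_of_nonneg_left ?_ (by positivity)
  refine intervalIntegral.integral_mono_on zero_le_one (hh.intervalIntegrable s)
    (hh'.intervalIntegrable s) fun t ht => ?_
  have := hle (s * t) (mul_nonneg hs ht.1)
  have := ht.1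
  dsimp only
  gcongr

lemma radialInverse_mono (hh : QuadraticGrowth M h) {M' : ℝ} (hh' : QuadraticGrowth M' h')
    (hle : ∀ x, 0 ≤ x → h x ≤ h' x) (r : ℝ) : radialInverse e h r ≤ radialInverse e h' r := by
  unfold radialInverse
  refine mul_le_mul_of_nonneg_left ?_ (Real.exp_nonneg _)
  exact setIntegral_mono_on hh.integrable_fluxDensity.integrableOn
    hh'.integrable_fluxDensity.integrableOn measurableSet_Ioi
    fun s hs => fluxDensity_mono hh hh' hle ((abs_nonneg r).trans hs.le)

lemma radialInverse_abs (r : ℝ) : radialInverse e h |r| = radialInverse e h r := by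
  simp [radialInverse]

lemma radialInverse_eq (hh : QuadraticGrowth M h) {r : ℝ} (hr : 0 ≤ r) :
    radialInverse e h r = Real.exp (r ^ 2 / 2) *
      ((∫ s in Ioi 0, fluxDensity e h s) - ∫ s in (0:ℝ)..r, fluxDensity e h s) := by
  have hi := (hh.integrable_fluxDensity (e := e)).integrableOn (s := Ioi (0:ℝ))
  have h1 := intervalIntegral.integral_Ioi_sub_Ioi hi hr
  rw [radialInverse, abs_of_nonneg hr, ← h1]
  ring

lemma continuous_radialInverse (hh : QuadraticGrowth M h) : Continuous (radialInverse e h) := by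
  have h1 : radialInverse e h = fun r => Real.exp (|r| ^ 2 / 2) *
      ((∫ s in Ioi 0, fluxDensity e h s) - ∫ s in (0:ℝ)..|r|, fluxDensity e h s) := by
    ext r
    rw [← radialInverse_abs, radialInverse_eq hh (abs_nonneg r)]
  rw [h1]
  have h2 := intervalIntegral.continuous_primitive
    (fun a b => (hh.integrable_fluxDensity (e := e)).intervalIntegrable) (0:ℝ)
  fun_prop

lemma tendsto_radialInverse {H : ℕ → ℝ → ℝ} (hH : ∀ m, QuadraticGrowth M (H m))
    (hlim : ∀ x, Tendsto (fun m => H m x) atTop (𝓝 (h x))) (r : ℝ) :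
    Tendsto (fun m => radialInverse e (H m) r) atTop (𝓝 (radialInverse e h r)) := by
  unfold radialInverse
  refine Tendsto.const_mul _ ?_
  refine tendsto_integral_of_dominated_convergence (fluxMajorant M)
    (fun m => (hH m).measurable_fluxDensity.aestronglyMeasurable)
    (integrable_fluxMajorant M).integrableOn
    (fun m => ae_of_all _ (hH m).abs_fluxDensity_le) (ae_of_all _ fun s => ?_)
  unfold fluxDensity
  refine Tendsto.const_mul _ ?_
  refine intervalIntegral.tendsto_integral_filter_of_dominated_convergence
    (fun _ => M * (1 + s ^ 2) * Real.exp (s ^ 2 / 2)) ?_ ?_ intervalIntegrable_const ?_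
  · refine Eventually.of_forall fun m => ?_
    have hm := (hH m).1
    exact Measurable.aestronglyMeasurable (by fun_prop)
  · refine Eventually.of_forall fun m => ae_of_all _ fun t ht => ?_
    rw [uIoc_of_le zero_le_one] at ht
    exact (hH m).abs_le ht
  · exact ae_of_all _ fun t _ => ((hlim _).const_mul _).const_mul _

lemma tendsto_exp_mul_radialInverse (hh : QuadraticGrowth M h) :
    Tendsto (fun r => Real.exp (-r ^ 2 / 2) * radialInverse e h r) atTop (𝓝 0) := by
  have hi := (hh.integrable_fluxDensity (e := e)).integrableOn (s := Ioi (0:ℝ))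
  have h1 := (intervalIntegral_tendsto_integral_Ioi 0 hi tendsto_id).const_sub
    (∫ s in Ioi 0, fluxDensity e h s)
  rw [sub_self] at h1
  refine h1.congr' ?_
  filter_upwards [eventually_ge_atTop 0] with r hr
  rw [radialInverse_eq hh hr, ← mul_assoc, ← Real.exp_add]
  simp [neg_div]

lemma hasDerivAt_weightedMean_of_pos (e : ℕ) {g : ℝ → ℝ} (hg : Continuous g) {s : ℝ}
    (hs : 0 < s) :
    HasDerivAt (weightedMean e g) ((g s - (e + 1) * weightedMean e g s) / s) s := by
  have h1 : HasDerivAt (fun s => ∫ τ in (0:ℝ)..s, τ ^ e * g τ) (s ^ e * g s) s :=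
    intervalIntegral.integral_hasDerivAt_right
      ((by fun_prop : Continuous fun τ => τ ^ e * g τ).intervalIntegrable _ _)
      ((by fun_prop : Continuous fun τ => τ ^ e * g τ).stronglyMeasurableAtFilter _ _)
      (by fun_prop : Continuous fun τ => τ ^ e * g τ).continuousAt
  have h2 := h1.fun_div (hasDerivAt_pow (e + 1) s) (pow_pos hs _).ne'
  have h3 : (fun s => (∫ τ in (0:ℝ)..s, τ ^ e * g τ) / s ^ (e + 1)) =ᶠ[𝓝 s] weightedMean e g := by
    filter_upwards [eventually_gt_nhds hs] with x hx
    rw [← pow_mul_weightedMean, mul_div_cancel_left₀ _ (pow_pos hx _).ne']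
  refine (h2.congr_of_eventuallyEq h3.symm).congr_deriv ?_
  rw [← pow_mul_weightedMean]
  have := (pow_pos hs e).ne'
  push_cast
  simp only [pow_succ]
  field_simp

lemma continuous_fluxDensity (hc : Continuous h) : Continuous (fluxDensity e h) := by
  have := continuous_weightedMean e (g := fun x => Real.exp (x ^ 2 / 2) * h x) (by fun_prop)
  unfold fluxDensity
  fun_prop

lemma hasDerivAt_exp_mul_radialInverse (hh : QuadraticGrowth M h) (hc : Continuous h) {r : ℝ}
    (hr : 0 < r) :
    HasDerivAt (fun r => Real.exp (-r ^ 2 / 2) * radialInverse e h r) (-fluxDensity e h r) r := by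
  have hfc := continuous_fluxDensity (e := e) hc
  have h1 : HasDerivAt (fun r => ∫ s in (0:ℝ)..r, fluxDensity e h s) (fluxDensity e h r) r :=
    intervalIntegral.integral_hasDerivAt_right (hfc.intervalIntegrable _ _)
      (hfc.stronglyMeasurableAtFilter _ _) hfc.continuousAt
  refine (h1.const_sub (∫ s in Ioi 0, fluxDensity e h s)).congr_of_eventuallyEq ?_
  filter_upwards [eventually_gt_nhds hr] with x hx
  rw [radialInverse_eq hh hx.le, ← mul_assoc, ← Real.exp_add]
  simp [neg_div]

lemma hasDerivAt_exp_sq (r : ℝ) :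
    HasDerivAt (fun r => Real.exp (r ^ 2 / 2)) (r * Real.exp (r ^ 2 / 2)) r := by
  have h1 := ((hasDerivAt_pow 2 r).div_const 2).exp
  refine h1.congr_deriv ?_
  simp
  ring

lemma hasDerivAt_exp_neg_sq (r : ℝ) :
    HasDerivAt (fun r => Real.exp (-r ^ 2 / 2)) (-r * Real.exp (-r ^ 2 / 2)) r := by
  have h1 := ((hasDerivAt_pow 2 r).neg.div_const 2).exp
  refine h1.congr_deriv ?_
  simp
  ring

lemma exp_sq_mul_exp_neg_sq (r : ℝ) : Real.exp (r ^ 2 / 2) * Real.exp (-r ^ 2 / 2) = 1 := by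
  rw [← Real.exp_add]
  simp [neg_div]

lemma fluxDensity_eq (r : ℝ) : fluxDensity e h r = r * Real.exp (-r ^ 2 / 2) *
    (Real.exp (-r ^ 2 / 2) * weightedMean e (fun x => Real.exp (x ^ 2 / 2) * h x) r) := by
  have : Real.exp (-r ^ 2) = Real.exp (-r ^ 2 / 2) * Real.exp (-r ^ 2 / 2) := by
    rw [← Real.exp_add]
    ring_nf
  rw [fluxDensity, this]
  ring

lemma hasDerivAt_radialInverse (hh : QuadraticGrowth M h) (hc : Continuous h) {r : ℝ}
    (hr : 0 < r) :
    HasDerivAt (radialInverse e h) (r * radialInverse e h r - r * (Real.exp (-r ^ 2 / 2) *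
      weightedMean e (fun x => Real.exp (x ^ 2 / 2) * h x) r)) r := by
  have h1 := (hasDerivAt_exp_sq r).mul (hasDerivAt_exp_mul_radialInverse (e := e) hh hc hr)
  have h2 : ((fun r => Real.exp (r ^ 2 / 2)) * fun r => Real.exp (-r ^ 2 / 2) *
      radialInverse e h r) = radialInverse e h := by
    ext x
    simp only [Pi.mul_apply]
    rw [← mul_assoc, exp_sq_mul_exp_neg_sq, one_mul]
  rw [h2] at h1
  refine h1.congr_deriv ?_
  rw [fluxDensity_eq]
  linear_combination (r * radialInverse e h r - r * (Real.exp (-r ^ 2 / 2) *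
      weightedMean e (fun x => Real.exp (x ^ 2 / 2) * h x) r)) * exp_sq_mul_exp_neg_sq r

/-- The solution operator solves the radial equation. -/
lemma radialInverse_ode (hh : QuadraticGrowth M h) (hc : Continuous h) {r : ℝ} (hr : 0 < r) :
    HasDerivAt (deriv (radialInverse e h)) ((r ^ 2 + e + 1) * radialInverse e h r
      - e / r * deriv (radialInverse e h) r - h r) r := by
  set W := weightedMean e (fun x => Real.exp (x ^ 2 / 2) * h x) with hW
  have h1 := hasDerivAt_radialInverse (e := e) hh hc hr
  have h2 : HasDerivAt W _ r := hasDerivAt_weightedMean_of_pos e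
    (g := fun x => Real.exp (x ^ 2 / 2) * h x) (by fun_prop) hr
  have h3 := ((hasDerivAt_id r).mul h1).sub
    ((hasDerivAt_id r).mul ((hasDerivAt_exp_neg_sq r).mul h2))
  have h4 : deriv (radialInverse e h) =ᶠ[𝓝 r] (id * radialInverse e h -
      id * ((fun r => Real.exp (-r ^ 2 / 2)) * W)) := by
    filter_upwards [eventually_gt_nhds hr] with x hx
    exact (hasDerivAt_radialInverse hh hc hx).deriv
  refine (h3.congr_of_eventuallyEq h4).congr_deriv ?_
  rw [h1.deriv]
  simp only [id, ← hW, Pi.mul_apply]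
  have hexp := exp_sq_mul_exp_neg_sq r
  generalize Real.exp (-r ^ 2 / 2) = E at *
  field_simp
  linear_combination (-h r) * hexp

/-- A subsolution of the radial equation lies below the solution. The functions `m` and `m₂` are
the first two Euler derivatives of `w`. -/
lemma le_radialInverse {j : ℕ} {w m m₂ : ℝ → ℝ} {B : ℝ} (hh : QuadraticGrowth M h)
    (hc : Continuous h) (hw : Continuous w) (hB : ∀ r, |w r| ≤ B)
    (hwm : ∀ r, 0 < r → HasDerivAt w (m r / r) r)
    (hm : ∀ r, 0 < r → HasDerivAt m (m₂ r / r) r)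
    (hm0 : Tendsto m (𝓝[>] 0) (𝓝 0))
    (hle : ∀ r, 0 < r → 0 ≤ m₂ r + j * m r - r ^ 2 * (r ^ 2 + j + 2) * w r + r ^ 2 * h r)
    {r : ℝ} (hr : 0 ≤ r) : w r ≤ radialInverse (j + 1) h r := by
  set W := weightedMean (j + 1) (fun x => Real.exp (x ^ 2 / 2) * h x) with hW
  have hgc : Continuous fun x => Real.exp (x ^ 2 / 2) * h x := by fun_prop
  have hWc : Continuous W := continuous_weightedMean _ hgc
  set N : ℝ → ℝ := fun x => x ^ j * (Real.exp (x ^ 2 / 2) * (m x - x ^ 2 * w x)) +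
    x ^ (j + 2) * W x with hN
  have hN' : ∀ x, 0 < x → HasDerivAt N (x ^ j * Real.exp (x ^ 2 / 2) / x *
      (m₂ x + j * m x - x ^ 2 * (x ^ 2 + j + 2) * w x + x ^ 2 * h x)) x := by
    intro x hx
    have d1 := ((hm x hx).fun_sub ((hasDerivAt_pow 2 x).fun_mul (hwm x hx)))
    have d2 := (hasDerivAt_pow j x).fun_mul ((hasDerivAt_exp_sq x).fun_mul d1)
    have d3 := (hasDerivAt_pow (j + 2) x).fun_mul
      (hasDerivAt_weightedMean_of_pos (j + 1) hgc hx)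
    refine (d2.fun_add d3).congr_deriv ?_
    have hj : (j : ℝ) * x ^ (j - 1) = j * x ^ j / x := by
      rcases j with _ | i
      · simp
      · simp only [Nat.add_sub_cancel, pow_succ]
        field_simp
    rw [hj, ← hW]
    push_cast
    simp only [pow_succ, pow_zero]
    field_simp
    ring
  have hNmono : MonotoneOn N (Ioi 0) := by
    refine monotoneOn_of_deriv_nonneg (convex_Ioi 0)
      (fun x hx => (hN' x hx).continuousAt.continuousWithinAt) ?_ ?_
    · rw [interior_Ioi]
      exact fun x hx => (hN' x hx).differentiableAt.differentiableWithinAt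
    · rw [interior_Ioi]
      intro x hx
      rw [(hN' x hx).deriv]
      have hx0 : (0:ℝ) < x := hx
      exact mul_nonneg (by positivity) (hle x hx)
  have hN0 : Tendsto N (𝓝[>] 0) (𝓝 0) := by
    have c1 : Tendsto (fun x : ℝ => x ^ j) (𝓝[>] 0) (𝓝 (0 ^ j)) :=
      ((continuous_pow j).tendsto 0).mono_left nhdsWithin_le_nhds
    have c2 : Tendsto (fun x : ℝ => Real.exp (x ^ 2 / 2)) (𝓝[>] 0) (𝓝 (Real.exp (0 ^ 2 / 2))) :=
      ((by fun_prop : Continuous fun x : ℝ => Real.exp (x ^ 2 / 2)).tendsto 0).mono_left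
        nhdsWithin_le_nhds
    have c3 : Tendsto (fun x : ℝ => x ^ 2 * w x) (𝓝[>] 0) (𝓝 (0 ^ 2 * w 0)) :=
      ((by fun_prop : Continuous fun x : ℝ => x ^ 2 * w x).tendsto 0).mono_left
        nhdsWithin_le_nhds
    have c4 : Tendsto (fun x : ℝ => x ^ (j + 2) * W x) (𝓝[>] 0) (𝓝 (0 ^ (j + 2) * W 0)) :=
      ((by fun_prop : Continuous fun x : ℝ => x ^ (j + 2) * W x).tendsto 0).mono_left
        nhdsWithin_le_nhds
    have c5 := (c1.mul (c2.mul (hm0.sub c3))).add c4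
    simpa using c5
  have hNnonneg : ∀ x, 0 < x → 0 ≤ N x := by
    intro x hx
    refine le_of_tendsto hN0 ?_
    filter_upwards [Ioo_mem_nhdsGT hx] with y hy
    exact hNmono hy.1 hx hy.2.le
  set D : ℝ → ℝ := fun x => Real.exp (-x ^ 2 / 2) * w x -
    Real.exp (-x ^ 2 / 2) * radialInverse (j + 1) h x with hD
  have hD' : ∀ x, 0 < x → HasDerivAt D
      ((Real.exp (-x ^ 2 / 2)) ^ 2 / x ^ (j + 1) * N x) x := by
    intro x hx
    have d1 := ((hasDerivAt_exp_neg_sq x).fun_mul (hwm x hx)).fun_sub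
      (hasDerivAt_exp_mul_radialInverse (e := j + 1) hh hc hx)
    refine d1.congr_deriv ?_
    rw [fluxDensity_eq, ← hW, hN]
    have hxj := (pow_pos hx j).ne'
    simp only [pow_succ _ (j + 1), pow_succ _ j]
    have hexp := exp_sq_mul_exp_neg_sq x
    generalize Real.exp (-x ^ 2 / 2) = E at *
    field_simp
    linear_combination E * (x ^ 2 * w x - m x) * hexp
  have hDmono : MonotoneOn D (Ioi 0) := by
    refine monotoneOn_of_deriv_nonneg (convex_Ioi 0)
      (fun x hx => (hD' x hx).continuousAt.continuousWithinAt) ?_ ?_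
    · rw [interior_Ioi]
      exact fun x hx => (hD' x hx).differentiableAt.differentiableWithinAt
    · rw [interior_Ioi]
      intro x hx
      rw [(hD' x hx).deriv]
      have hx0 : (0:ℝ) < x := hx
      exact mul_nonneg (by positivity) (hNnonneg x hx)
  have hDlim : Tendsto D atTop (𝓝 0) := by
    have l1 : Tendsto (fun x : ℝ => Real.exp (-x ^ 2 / 2)) atTop (𝓝 0) := by
      refine Real.tendsto_exp_atBot.comp ?_
      simp only [neg_div]
      exact tendsto_neg_atTop_atBot.comp
        ((tendsto_pow_atTop two_ne_zero).atTop_div_const two_pos)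
    have l2 : Tendsto (fun x => Real.exp (-x ^ 2 / 2) * w x) atTop (𝓝 0) :=
      l1.zero_mul_isBoundedUnder_le (isBoundedUnder_of ⟨B, hB⟩)
    simpa using l2.sub (tendsto_exp_mul_radialInverse hh)
  have hpos : ∀ x, 0 < x → w x ≤ radialInverse (j + 1) h x := by
    intro x hx
    have h0 : D x ≤ 0 := by
      refine ge_of_tendsto hDlim ?_
      filter_upwards [eventually_ge_atTop x] with y hy
      exact hDmono hx (hx.trans_le hy) hy
    have he := Real.exp_pos (-x ^ 2 / 2)
    rw [hD] at h0
    exact le_of_mul_le_mul_left (sub_nonpos.1 h0) he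
  have hcl : r ∈ closure (Ioi (0:ℝ)) := by
    rw [closure_Ioi]
    exact hr
  exact ContinuousWithinAt.closure_le hcl hw.continuousWithinAt
    (continuous_radialInverse hh).continuousWithinAt hpos

lemma radialInverse_neg (r : ℝ) : radialInverse e (fun x => -h x) r = -radialInverse e h r := by
  simp only [radialInverse, fluxDensity, weightedMean, mul_neg, intervalIntegral.integral_neg,
    integral_neg]

/-- A supersolution of the radial equation lies above the solution. -/
lemma radialInverse_le {j : ℕ} {w m m₂ : ℝ → ℝ} {B : ℝ} (hh : QuadraticGrowth M h)
    (hc : Continuous h) (hw : Continuous w) (hB : ∀ r, |w r| ≤ B)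
    (hwm : ∀ r, 0 < r → HasDerivAt w (m r / r) r)
    (hm : ∀ r, 0 < r → HasDerivAt m (m₂ r / r) r)
    (hm0 : Tendsto m (𝓝[>] 0) (𝓝 0))
    (hle : ∀ r, 0 < r → m₂ r + j * m r - r ^ 2 * (r ^ 2 + j + 2) * w r + r ^ 2 * h r ≤ 0)
    {r : ℝ} (hr : 0 ≤ r) : radialInverse (j + 1) h r ≤ w r := by
  have hh' : QuadraticGrowth M fun x => -h x := ⟨hh.1.neg, fun x => by simpa using hh.2 x⟩
  have := le_radialInverse (j := j) (w := fun x => -w x) (m := fun x => -m x)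
    (m₂ := fun x => -m₂ x) (B := B) hh' hc.neg hw.neg (by simpa using hB)
    (fun x hx => by simpa [neg_div] using (hwm x hx).fun_neg)
    (fun x hx => by simpa [neg_div] using (hm x hx).fun_neg)
    (by simpa using hm0.neg) (fun x hx => by linarith [hle x hx]) hr
  rw [radialInverse_neg] at this
  linarith

lemma radialInverse_eq_of_even (hh : QuadraticGrowth M h) (hev : ∀ x, h (-x) = h x) (r : ℝ) :
    radialInverse e h r = Real.exp (r ^ 2 / 2) *
      ((∫ s in Ioi 0, fluxDensity e h s) - ∫ s in (0:ℝ)..r, fluxDensity e h s) := by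
  rcases le_total 0 r with hr | hr
  · exact radialInverse_eq hh hr
  · have hodd : ∀ s, fluxDensity e h (-s) = -fluxDensity e h s := by
      intro s
      simp [fluxDensity, weightedMean_neg_of_even e
        (g := fun x => Real.exp (x ^ 2 / 2) * h x) (by simp [hev])]
    have h1 : ∫ s in (0:ℝ)..-r, fluxDensity e h s = ∫ s in (0:ℝ)..r, fluxDensity e h s := by
      have h2 := intervalIntegral.integral_comp_neg (a := 0) (b := r) (fluxDensity e h)
      simp only [hodd, intervalIntegral.integral_neg, neg_zero] at h2
      rw [intervalIntegral.integral_symm, ← h2, neg_neg]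
    rw [← radialInverse_abs, abs_of_nonpos hr, radialInverse_eq hh (neg_nonneg.2 hr), h1, neg_sq]

lemma contDiff_radialInverse (hh : QuadraticGrowth M h) (hev : ∀ x, h (-x) = h x) {m : ℕ}
    (hs : ContDiff ℝ m h) : ContDiff ℝ (m + 1) (radialInverse e h) := by
  rw [funext fun r => radialInverse_eq_of_even (e := e) hh hev r]
  have hexp : ∀ k : WithTop ℕ∞, ContDiff ℝ k fun x : ℝ => Real.exp (x ^ 2 / 2) :=
    fun k => by fun_prop
  have hf : ContDiff ℝ m (fluxDensity e h) := by
    have h1 := contDiff_weightedMean m e ((hexp m).mul hs)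
    have h2 : ContDiff ℝ m fun s : ℝ => s * Real.exp (-s ^ 2) := by fun_prop
    exact h2.mul h1
  have hp : ∀ r, HasDerivAt (fun r => ∫ s in (0:ℝ)..r, fluxDensity e h s)
      (fluxDensity e h r) r := fun r =>
    intervalIntegral.integral_hasDerivAt_right (hf.continuous.intervalIntegrable _ _)
      (hf.continuous.stronglyMeasurableAtFilter _ _) hf.continuous.continuousAt
  have hprim : ContDiff ℝ (m + 1) fun r => ∫ s in (0:ℝ)..r, fluxDensity e h s := by
    refine contDiff_succ_iff_deriv.2 ⟨fun r => (hp r).differentiableAt, by simp, ?_⟩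
    rwa [funext fun r => (hp r).deriv]
  exact (hexp _).mul (contDiff_const.sub hprim)

/-! ### The normalized system -/

/-- The shifted source of the equation for the amplitude `a`, where `u = rⁿ a`. -/
noncomputable def sourceA (n : ℕ) (δ a y r : ℝ) : ℝ :=
  (r ^ 2 + 2 * n + 2) * a -
    1 / 10 * a * (3 * ((r ^ n * a) ^ 2 - 1) + δ ^ 2 * ((1 - y) * (3 - y)))

/-- The shifted source of the equation for the order parameter `y`. -/
noncomputable def sourceY (n : ℕ) (δ a y r : ℝ) : ℝ :=
  (r ^ 2 + 2) * y -
    1 / 10 * ((1 + δ * (1 - y)) * (3 + δ * (1 - y)) * y - 3 * (r ^ n * a) ^ 2 * (2 - y))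

/-- The upper barrier for the amplitude. -/
noncomputable def barrier (n : ℕ) (r : ℝ) : ℝ := (1 + r ^ 2) ^ (-(n : ℝ) / 2)

variable {n : ℕ} {δ : ℝ}

lemma rpow_neg_half_sq {x : ℝ} (hx : 0 < x) (n : ℕ) : (x ^ (-(n : ℝ) / 2)) ^ 2 = (x ^ n)⁻¹ := by
  rw [← Real.rpow_natCast (x ^ (-(n : ℝ) / 2)), ← Real.rpow_mul hx.le]
  norm_num

lemma barrier_pos (n : ℕ) (r : ℝ) : 0 < barrier n r := Real.rpow_pos_of_pos (by positivity) _

lemma barrier_le_one (n : ℕ) (r : ℝ) : barrier n r ≤ 1 :=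
  Real.rpow_le_one_of_one_le_of_nonpos (by nlinarith [sq_nonneg r])
    (by have : (0:ℝ) ≤ n := n.cast_nonneg
        linarith)

lemma pow_mul_rpow_sq {C : ℝ} (hC : 0 < C) (n : ℕ) (r : ℝ) :
    (r ^ n * (C + r ^ 2) ^ (-(n : ℝ) / 2)) ^ 2 = (r ^ 2 / (C + r ^ 2)) ^ n := by
  rw [mul_pow, rpow_neg_half_sq (by positivity), ← pow_mul, mul_comm n 2, pow_mul, div_pow, div_eq_mul_inv]

lemma pow_mul_barrier_sq (n : ℕ) (r : ℝ) :
    (r ^ n * barrier n r) ^ 2 = (r ^ 2 / (1 + r ^ 2)) ^ n :=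
  pow_mul_rpow_sq one_pos n r

lemma sq_pow_mul_le_one {a r : ℝ} (ha : 0 ≤ a) (hb : a ≤ barrier n r) :
    (r ^ n * a) ^ 2 ≤ 1 := by
  calc (r ^ n * a) ^ 2 ≤ (r ^ n * barrier n r) ^ 2 := by
        rw [mul_pow, mul_pow]
        gcongr
    _ = (r ^ 2 / (1 + r ^ 2)) ^ n := pow_mul_barrier_sq n r
    _ ≤ 1 := pow_le_one₀ (by positivity) (div_le_one_of_le₀ (by linarith) (by positivity))

lemma sourceA_mono (hδ : δ ^ 2 ≤ 1) {a a' y y' r : ℝ} (ha : 0 ≤ a) (haa : a ≤ a')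
    (hb : (r ^ n * a') ^ 2 ≤ 1) (hyy : y ≤ y') (hy : 0 ≤ y) (hy' : y' ≤ 1) :
    sourceA n δ a y r ≤ sourceA n δ a' y' r := by
  set X := (r ^ n) ^ 2 with hX
  have hX0 : 0 ≤ X := sq_nonneg _
  rw [mul_pow, ← hX] at hb
  have hn : (0:ℝ) ≤ n := n.cast_nonneg
  have hcube : X * (a' ^ 3 - a ^ 3) ≤ 3 * (a' - a) := by
    have h1 : X * (a' ^ 2 + a * a' + a ^ 2) ≤ 3 := by
      have h2 : X * (a * a') ≤ X * a' ^ 2 := by gcongr; nlinarith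
      have h3 : X * a ^ 2 ≤ X * a' ^ 2 := by gcongr
      linarith
    nlinarith [mul_le_mul_of_nonneg_left h1 (sub_nonneg.2 haa)]
  have hpot : δ ^ 2 * ((1 - y') * (3 - y')) ≤ δ ^ 2 * ((1 - y) * (3 - y)) := by
    gcongr <;> linarith
  have hpot' : δ ^ 2 * ((1 - y') * (3 - y')) ≤ 3 := by
    nlinarith [mul_nonneg (sub_nonneg.2 hy') (by linarith : 0 ≤ 3 - y')]
  have h4 : a * (δ ^ 2 * ((1 - y') * (3 - y'))) ≤ a * (δ ^ 2 * ((1 - y) * (3 - y))) := by gcongr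
  have h5 : (a' - a) * (δ ^ 2 * ((1 - y') * (3 - y'))) ≤ (a' - a) * 3 :=
    mul_le_mul_of_nonneg_left hpot' (sub_nonneg.2 haa)
  have h6 : 0 ≤ (r ^ 2 + 2 * n) * (a' - a) := mul_nonneg (by positivity) (sub_nonneg.2 haa)
  simp only [sourceA, mul_pow, ← hX]
  nlinarith

lemma sourceY_mono (hδ : δ ^ 2 ≤ 1) {a a' y y' r : ℝ} (ha : 0 ≤ a) (haa : a ≤ a')
    (hb : (r ^ n * a') ^ 2 ≤ 1) (hyy : y ≤ y') (hy : 0 ≤ y) (hy' : y' ≤ 1) :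
    sourceY n δ a y r ≤ sourceY n δ a' y' r := by
  have hδ' := abs_le.1 ((sq_le_one_iff_abs_le_one δ).1 hδ)
  have hX : (r ^ n * a) ^ 2 ≤ (r ^ n * a') ^ 2 := by
    rw [mul_pow, mul_pow]
    gcongr
  have h0 : 0 ≤ (r ^ n * a) ^ 2 := sq_nonneg _
  unfold sourceY
  generalize (r ^ n * a) ^ 2 = X at *
  generalize (r ^ n * a') ^ 2 = X' at *
  have h1 : X * (2 - y) - X' * (2 - y') ≤ y' - y := by
    nlinarith [mul_nonneg (sub_nonneg.2 hX) (by linarith : 0 ≤ 2 - y')]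
  set s := δ * (1 - y) with hs
  set s' := δ * (1 - y') with hs'
  have hs1 : -1 ≤ s ∧ s ≤ 1 := by constructor <;> nlinarith
  have hs1' : -1 ≤ s' ∧ s' ≤ 1 := by constructor <;> nlinarith
  have hss : |s' - s| ≤ y' - y := by
    rw [hs, hs', show δ * (1 - y') - δ * (1 - y) = -(δ * (y' - y)) by ring, abs_neg, abs_mul,
      abs_of_nonneg (sub_nonneg.2 hyy)]
    exact mul_le_of_le_one_left (sub_nonneg.2 hyy) (abs_le.2 hδ')
  have h2 : (1 + s') * (3 + s') * y' - (1 + s) * (3 + s) * y ≤ 14 * (y' - y) := by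
    have e1 : (1 + s') * (3 + s') ≤ 8 := by nlinarith
    have e2 : (s' - s) * (4 + s' + s) ≤ (y' - y) * 6 := by
      have := abs_le.1 hss
      rcases le_total 0 (s' - s) with h | h <;> nlinarith
    have e3 : (s' - s) * (4 + s' + s) * y ≤ (y' - y) * 6 := by
      nlinarith [mul_le_mul_of_nonneg_right e2 hy]
    nlinarith [mul_le_mul_of_nonneg_right e1 (sub_nonneg.2 hyy)]
  nlinarith [mul_nonneg (sq_nonneg r) (sub_nonneg.2 hyy)]

/-- Pairs of functions lying between zero and the upper barrier. -/
structure Admissible (n : ℕ) (f g : ℝ → ℝ) : Prop where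
  measurable_fst : Measurable f
  measurable_snd : Measurable g
  fst_nonneg : ∀ r, 0 ≤ f r
  fst_le : ∀ r, f r ≤ barrier n r
  snd_nonneg : ∀ r, 0 ≤ g r
  snd_le : ∀ r, g r ≤ 1

/-- The first component of the monotone map. -/
noncomputable def stepA (n : ℕ) (δ : ℝ) (f g : ℝ → ℝ) : ℝ → ℝ :=
  radialInverse (2 * n + 1) fun r => sourceA n δ (f r) (g r) r

/-- The second component of the monotone map. -/
noncomputable def stepY (n : ℕ) (δ : ℝ) (f g : ℝ → ℝ) : ℝ → ℝ :=
  radialInverse 1 fun r => sourceY n δ (f r) (g r) r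

variable {f g f' g' : ℝ → ℝ}

lemma Admissible.sq_le_one (hfg : Admissible n f g) (r : ℝ) : (r ^ n * f r) ^ 2 ≤ 1 :=
  sq_pow_mul_le_one (hfg.fst_nonneg r) (hfg.fst_le r)

lemma Admissible.growthA (hfg : Admissible n f g) (hδ : δ ^ 2 ≤ 1) :
    QuadraticGrowth (2 * n + 3) fun r => sourceA n δ (f r) (g r) r := by
  have hf := hfg.measurable_fst
  have hg := hfg.measurable_snd
  refine ⟨by unfold sourceA; fun_prop, fun r => ?_⟩
  have h0 := sourceA_mono (n := n) hδ le_rfl (hfg.fst_nonneg r) (hfg.sq_le_one r)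
    (hfg.snd_nonneg r) le_rfl (hfg.snd_le r)
  have h1 := sourceA_mono (n := n) hδ (hfg.fst_nonneg r) le_rfl (hfg.sq_le_one r)
    (hfg.snd_le r) (hfg.snd_nonneg r) le_rfl
  have h2 : sourceA n δ 0 0 r = 0 := by simp [sourceA]
  rw [abs_of_nonneg (h2 ▸ h0)]
  refine h1.trans ?_
  have hf0 := hfg.fst_nonneg r
  have hf1 := (hfg.fst_le r).trans (barrier_le_one n r)
  have hX := hfg.sq_le_one r
  have hX0 := sq_nonneg (r ^ n * f r)
  have hn : (0:ℝ) ≤ n := n.cast_nonneg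
  unfold sourceA
  generalize (r ^ n * f r) ^ 2 = X at *
  have h3 : f r * (1 - X) ≤ 1 := by nlinarith
  nlinarith [mul_le_mul_of_nonneg_left hf1 (by positivity : 0 ≤ r ^ 2 + 2 * n + 2),
    mul_nonneg hn (sq_nonneg r)]

lemma Admissible.growthY (hfg : Admissible n f g) (hδ : δ ^ 2 ≤ 1) :
    QuadraticGrowth 2 fun r => sourceY n δ (f r) (g r) r := by
  have hf := hfg.measurable_fst
  have hg := hfg.measurable_snd
  refine ⟨by unfold sourceY; fun_prop, fun r => ?_⟩
  have h0 := sourceY_mono (n := n) hδ le_rfl (hfg.fst_nonneg r) (hfg.sq_le_one r)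
    (hfg.snd_nonneg r) le_rfl (hfg.snd_le r)
  have h1 := sourceY_mono (n := n) hδ (hfg.fst_nonneg r) le_rfl (hfg.sq_le_one r)
    (hfg.snd_le r) (hfg.snd_nonneg r) le_rfl
  have h2 : sourceY n δ 0 0 r = 0 := by simp [sourceY]
  rw [abs_of_nonneg (h2 ▸ h0)]
  refine h1.trans ?_
  have hX := hfg.sq_le_one r
  unfold sourceY
  nlinarith [sq_nonneg r]

lemma Admissible.stepA_mono (hfg : Admissible n f g) (hfg' : Admissible n f' g')
    (hδ : δ ^ 2 ≤ 1) (hf : ∀ r, f r ≤ f' r) (hg : ∀ r, g r ≤ g' r) (r : ℝ) :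
    stepA n δ f g r ≤ stepA n δ f' g' r :=
  radialInverse_mono (hfg.growthA hδ) (hfg'.growthA hδ) (fun x _ =>
    sourceA_mono hδ (hfg.fst_nonneg x) (hf x) (hfg'.sq_le_one x) (hg x) (hfg.snd_nonneg x)
      (hfg'.snd_le x)) r

lemma Admissible.stepY_mono (hfg : Admissible n f g) (hfg' : Admissible n f' g')
    (hδ : δ ^ 2 ≤ 1) (hf : ∀ r, f r ≤ f' r) (hg : ∀ r, g r ≤ g' r) (r : ℝ) :
    stepY n δ f g r ≤ stepY n δ f' g' r :=
  radialInverse_mono (hfg.growthY hδ) (hfg'.growthY hδ) (fun x _ =>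
    sourceY_mono hδ (hfg.fst_nonneg x) (hf x) (hfg'.sq_le_one x) (hg x) (hfg.snd_nonneg x)
      (hfg'.snd_le x)) r

lemma continuous_barrier (n : ℕ) : Continuous (barrier n) :=
  (by fun_prop : Continuous fun r : ℝ => 1 + r ^ 2).rpow_const
    fun r => Or.inl (by positivity)

lemma admissible_zero (n : ℕ) : Admissible n (fun _ => 0) fun _ => 0 :=
  ⟨measurable_const, measurable_const, fun _ => le_rfl, fun r => (barrier_pos n r).le,
    fun _ => le_rfl, fun _ => zero_le_one⟩

lemma admissible_barrier (n : ℕ) : Admissible n (barrier n) fun _ => 1 :=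
  ⟨(continuous_barrier n).measurable, measurable_const, fun r => (barrier_pos n r).le,
    fun _ => le_rfl, fun _ => zero_le_one, fun _ => le_rfl⟩

/-- Euler derivative of a half-integer power of `C + r²`. -/
lemma hasDerivAt_rpow_neg_half {C : ℝ} (hC : 0 < C) (n : ℕ) {r : ℝ} (hr : 0 < r) :
    HasDerivAt (fun r : ℝ => (C + r ^ 2) ^ (-(n : ℝ) / 2))
      (-n * (r ^ 2 / (C + r ^ 2)) * (C + r ^ 2) ^ (-(n : ℝ) / 2) / r) r := by
  have hpos : 0 < C + r ^ 2 := by positivity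
  have h1 := ((hasDerivAt_pow 2 r).const_add C).rpow_const (p := -(n : ℝ) / 2) (Or.inl hpos.ne')
  refine h1.congr_deriv ?_
  rw [Real.rpow_sub_one hpos.ne']
  field_simp
  simp
  ring

lemma hasDerivAt_sq_div {C : ℝ} (hC : 0 < C) {r : ℝ} (hr : 0 < r) :
    HasDerivAt (fun r : ℝ => r ^ 2 / (C + r ^ 2))
      (2 * (r ^ 2 / (C + r ^ 2)) * (1 - r ^ 2 / (C + r ^ 2)) / r) r := by
  have hpos : 0 < C + r ^ 2 := by positivity
  refine ((hasDerivAt_pow 2 r).fun_div ((hasDerivAt_pow 2 r).const_add C) hpos.ne').congr_deriv ?_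
  simp
  field_simp

lemma stepA_barrier_le (hn : 1 ≤ n) (hδ : δ ^ 2 ≤ 1) (r : ℝ) :
    stepA n δ (barrier n) (fun _ => 1) r ≤ barrier n r := by
  have hcont := continuous_barrier n
  have key : ∀ r, 0 ≤ r → stepA n δ (barrier n) (fun _ => 1) r ≤ barrier n r := by
    intro r hr
    refine radialInverse_le (j := 2 * n) (B := 1)
      (m := fun r => -n * (r ^ 2 / (1 + r ^ 2)) * barrier n r)
      (m₂ := fun r => n * (r ^ 2 / (1 + r ^ 2)) * barrier n r *
        (n * (r ^ 2 / (1 + r ^ 2)) - 2 * (1 - r ^ 2 / (1 + r ^ 2))))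
      ((admissible_barrier n).growthA hδ) (by unfold sourceA; fun_prop) hcont ?_ ?_ ?_ ?_ ?_ hr
    · intro r
      rw [abs_of_pos (barrier_pos n r)]
      exact barrier_le_one n r
    · exact fun r hr => hasDerivAt_rpow_neg_half one_pos n hr
    · intro r hr
      refine (((hasDerivAt_sq_div one_pos hr).const_mul (-(n : ℝ))).fun_mul
        (hasDerivAt_rpow_neg_half one_pos n hr)).congr_deriv ?_
      rw [barrier]
      ring
    · have hc : Continuous fun r : ℝ => -n * (r ^ 2 / (1 + r ^ 2)) * barrier n r := by
        have : ∀ r : ℝ, 1 + r ^ 2 ≠ 0 := fun r => by positivity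
        fun_prop (disch := assumption)
      simpa using (hc.tendsto 0).mono_left (nhdsWithin_le_nhds (s := Ioi 0))
    · intro r hr
      have hb := barrier_pos n r
      unfold sourceA
      rw [pow_mul_barrier_sq]
      set q := r ^ 2 / (1 + r ^ 2) with hq
      have hq0 : 0 ≤ q := by positivity
      have hr2 : r ^ 2 * (1 - q) = q := by
        rw [hq]
        field_simp
        ring
      have hq1 : q ≤ 1 := div_le_one_of_le₀ (by linarith) (by positivity)
      have hbern : 1 + (n : ℝ) * (q - 1) ≤ q ^ n := by
        have := one_add_mul_le_pow (a := q - 1) (by linarith) n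
        simpa using this
      have hn' : (1:ℝ) ≤ n := by exact_mod_cast hn
      have h1 : r ^ 2 * (1 - q ^ n) ≤ n * q := by
        calc r ^ 2 * (1 - q ^ n) ≤ r ^ 2 * (n * (1 - q)) := by
              gcongr
              linarith
          _ = n * q := by linear_combination (n : ℝ) * hr2
      have h2 : n * q * (n * q - 2 * (1 - q)) - 2 * n * (n * q) +
          3 / 10 * (r ^ 2 * (1 - q ^ n)) ≤ 0 := by
        have e1 : 0 ≤ (n:ℝ) * q := by positivity
        have e2 : 0 ≤ (n:ℝ) * q * (n * (1 - q)) :=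
          mul_nonneg e1 (mul_nonneg (by positivity) (by linarith))
        have e3 : 0 ≤ (n:ℝ) * q * (1 - q) := mul_nonneg e1 (by linarith)
        have e4 : 0 ≤ (n:ℝ) * q * (n - 1) := mul_nonneg e1 (by linarith)
        nlinarith
      have h3 := mul_nonpos_of_nonneg_of_nonpos hb.le h2
      push_cast
      nlinarith
  have := key |r| (abs_nonneg r)
  rw [stepA, radialInverse_abs] at this
  simpa [barrier, stepA] using this

lemma stepY_barrier_le (hδ : δ ^ 2 ≤ 1) (r : ℝ) :
    stepY n δ (barrier n) (fun _ => 1) r ≤ 1 := by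
  have hcont := continuous_barrier n
  have key : ∀ r, 0 ≤ r → stepY n δ (barrier n) (fun _ => 1) r ≤ 1 := by
    intro r hr
    refine radialInverse_le (j := 0) (B := 1) (w := fun _ => 1) (m := fun _ => 0)
      (m₂ := fun _ => 0) ((admissible_barrier n).growthY hδ) (by unfold sourceY; fun_prop)
      continuous_const (by simp) (fun r _ => by simpa using hasDerivAt_const r (1:ℝ))
      (fun r _ => by simpa using hasDerivAt_const r (0:ℝ)) tendsto_const_nhds ?_ hr
    intro r hr
    have h1 := (admissible_barrier n).sq_le_one r
    unfold sourceY
    nlinarith [mul_nonneg (sq_nonneg r) (sub_nonneg.2 h1)]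
  have := key |r| (abs_nonneg r)
  rwa [stepY, radialInverse_abs] at this

lemma radialInverse_zero (r : ℝ) : radialInverse e (fun _ => 0) r = 0 := by
  simp [radialInverse, fluxDensity, weightedMean]

lemma Admissible.step (hfg : Admissible n f g) (hn : 1 ≤ n) (hδ : δ ^ 2 ≤ 1) :
    Admissible n (stepA n δ f g) (stepY n δ f g) where
  measurable_fst := (continuous_radialInverse (hfg.growthA hδ)).measurable
  measurable_snd := (continuous_radialInverse (hfg.growthY hδ)).measurable
  fst_nonneg r := by
    have := (admissible_zero n).stepA_mono hfg hδ hfg.fst_nonneg hfg.snd_nonneg r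
    simpa [stepA, sourceA, radialInverse_zero] using this
  snd_nonneg r := by
    have := (admissible_zero n).stepY_mono hfg hδ hfg.fst_nonneg hfg.snd_nonneg r
    simpa [stepY, sourceY, radialInverse_zero] using this
  fst_le r := (hfg.stepA_mono (admissible_barrier n) hδ hfg.fst_le hfg.snd_le r).trans
    (stepA_barrier_le hn hδ r)
  snd_le r := (hfg.stepY_mono (admissible_barrier n) hδ hfg.fst_le hfg.snd_le r).trans
    (stepY_barrier_le hδ r)

/-- Monotone iteration above a subsolution converges to a fixed point. -/
theorem exists_fixedPoint (hfg : Admissible n f g) (hn : 1 ≤ n) (hδ : δ ^ 2 ≤ 1)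
    (hf : ∀ r, f r ≤ stepA n δ f g r) (hg : ∀ r, g r ≤ stepY n δ f g r) :
    ∃ a y : ℝ → ℝ, Admissible n a y ∧ (∀ r, f r ≤ a r) ∧ (∀ r, g r ≤ y r) ∧
      stepA n δ a y = a ∧ stepY n δ a y = y := by
  set Z : ℕ → (ℝ → ℝ) × (ℝ → ℝ) :=
    fun m => (fun z => (stepA n δ z.1 z.2, stepY n δ z.1 z.2))^[m] (f, g) with hZ
  have hsucc : ∀ m, Z (m + 1) = (stepA n δ (Z m).1 (Z m).2, stepY n δ (Z m).1 (Z m).2) :=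
    fun m => Function.iterate_succ_apply' _ _ _
  have hadm : ∀ m, Admissible n (Z m).1 (Z m).2 := by
    intro m
    induction m with
    | zero => exact hfg
    | succ m ih => rw [hsucc]; exact ih.step hn hδ
  have hinc : ∀ m, (∀ r, (Z m).1 r ≤ (Z (m + 1)).1 r) ∧ ∀ r, (Z m).2 r ≤ (Z (m + 1)).2 r := by
    intro m
    induction m with
    | zero => exact ⟨hf, hg⟩
    | succ m ih =>
      have h1 := (hadm m).stepA_mono (hadm (m + 1)) hδ ih.1 ih.2
      have h2 := (hadm m).stepY_mono (hadm (m + 1)) hδ ih.1 ih.2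
      rw [hsucc (m + 1)]
      rw [show (Z (m + 1)) = (stepA n δ (Z m).1 (Z m).2, stepY n δ (Z m).1 (Z m).2) from hsucc m]
        at *
      exact ⟨h1, h2⟩
  have hm1 : ∀ r, Monotone fun m => (Z m).1 r := fun r => monotone_nat_of_le_succ
    fun m => (hinc m).1 r
  have hm2 : ∀ r, Monotone fun m => (Z m).2 r := fun r => monotone_nat_of_le_succ
    fun m => (hinc m).2 r
  have hb1 : ∀ r, BddAbove (range fun m => (Z m).1 r) := fun r =>
    ⟨barrier n r, by rintro _ ⟨m, rfl⟩; exact (hadm m).fst_le r⟩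
  have hb2 : ∀ r, BddAbove (range fun m => (Z m).2 r) := fun r =>
    ⟨1, by rintro _ ⟨m, rfl⟩; exact (hadm m).snd_le r⟩
  set a : ℝ → ℝ := fun r => ⨆ m, (Z m).1 r with ha
  set y : ℝ → ℝ := fun r => ⨆ m, (Z m).2 r with hy
  have hta : ∀ r, Tendsto (fun m => (Z m).1 r) atTop (𝓝 (a r)) := fun r =>
    tendsto_atTop_ciSup (hm1 r) (hb1 r)
  have hty : ∀ r, Tendsto (fun m => (Z m).2 r) atTop (𝓝 (y r)) := fun r =>
    tendsto_atTop_ciSup (hm2 r) (hb2 r)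
  have hfa : ∀ r, f r ≤ a r := fun r => le_ciSup (hb1 r) 0
  have hgy : ∀ r, g r ≤ y r := fun r => le_ciSup (hb2 r) 0
  have hay : Admissible n a y :=
    ⟨measurable_of_tendsto_metrizable (fun m => (hadm m).measurable_fst) (tendsto_pi_nhds.2 hta),
      measurable_of_tendsto_metrizable (fun m => (hadm m).measurable_snd) (tendsto_pi_nhds.2 hty),
      fun r => (hfg.fst_nonneg r).trans (hfa r), fun r => ciSup_le fun m => (hadm m).fst_le r,
      fun r => (hfg.snd_nonneg r).trans (hgy r), fun r => ciSup_le fun m => (hadm m).snd_le r⟩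
  refine ⟨a, y, hay, hfa, hgy, ?_, ?_⟩
  · ext r
    have h1 := tendsto_radialInverse (e := 2 * n + 1) (fun m => (hadm m).growthA hδ)
      (h := fun r => sourceA n δ (a r) (y r) r) (fun x => by
        have hcont : Continuous fun z : ℝ × ℝ => sourceA n δ z.1 z.2 x := by
          unfold sourceA; fun_prop
        exact (hcont.tendsto (a x, y x)).comp ((hta x).prodMk_nhds (hty x))) r
    refine tendsto_nhds_unique h1 (((hta r).comp (tendsto_add_atTop_nat 1)).congr fun m => ?_)
    simp only [Function.comp, hsucc]
    rfl
  · ext r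
    have h1 := tendsto_radialInverse (e := 1) (fun m => (hadm m).growthY hδ)
      (h := fun r => sourceY n δ (a r) (y r) r) (fun x => by
        have hcont : Continuous fun z : ℝ × ℝ => sourceY n δ z.1 z.2 x := by
          unfold sourceY; fun_prop
        exact (hcont.tendsto (a x, y x)).comp ((hta x).prodMk_nhds (hty x))) r
    refine tendsto_nhds_unique h1 (((hty r).comp (tendsto_add_atTop_nat 1)).congr fun m => ?_)
    simp only [Function.comp, hsucc]
    rfl

/-! ### The subsolution -/

/-- The `n`-th power of `r² / (C + r²)`. -/
noncomputable def ratio (n : ℕ) (C r : ℝ) : ℝ := (r ^ 2 / (C + r ^ 2)) ^ n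

/-- The first component of the subsolution. -/
noncomputable def subA (n : ℕ) (C r : ℝ) : ℝ := 4 * (C + r ^ 2) ^ (-(n : ℝ) / 2) / (3 + ratio n C r)

/-- The second component of the subsolution. -/
noncomputable def subY (n : ℕ) (C r : ℝ) : ℝ := 4 * ratio n C r / (3 + ratio n C r)

variable {C : ℝ}

lemma sq_div_nonneg (hC : 0 < C) (r : ℝ) : 0 ≤ r ^ 2 / (C + r ^ 2) := by positivity

lemma sq_div_le_one (hC : 0 < C) (r : ℝ) : r ^ 2 / (C + r ^ 2) ≤ 1 :=
  div_le_one_of_le₀ (by linarith) (by positivity)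

lemma ratio_nonneg (n : ℕ) (hC : 0 < C) (r : ℝ) : 0 ≤ ratio n C r :=
  pow_nonneg (sq_div_nonneg hC r) n

lemma ratio_le_one (n : ℕ) (hC : 0 < C) (r : ℝ) : ratio n C r ≤ 1 :=
  pow_le_one₀ (sq_div_nonneg hC r) (sq_div_le_one hC r)

lemma ratio_le (hn : 1 ≤ n) (hC : 0 < C) (r : ℝ) : ratio n C r ≤ r ^ 2 / (C + r ^ 2) :=
  pow_le_of_le_one (sq_div_nonneg hC r) (sq_div_le_one hC r) (by omega)

lemma continuous_ratio (n : ℕ) (hC : 0 < C) : Continuous (ratio n C) := by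
  have : ∀ r : ℝ, C + r ^ 2 ≠ 0 := fun r => by positivity
  unfold ratio
  fun_prop (disch := assumption)

lemma continuous_subY (n : ℕ) (hC : 0 < C) : Continuous (subY n C) :=
  ((continuous_ratio n hC).const_mul 4).div (by have := continuous_ratio n hC; fun_prop)
    fun r => by have := ratio_nonneg n hC r; positivity

lemma continuous_subA (n : ℕ) (hC : 0 < C) : Continuous (subA n C) := by
  have h1 : Continuous fun r : ℝ => (C + r ^ 2) ^ (-(n : ℝ) / 2) :=
    (by fun_prop : Continuous fun r : ℝ => C + r ^ 2).rpow_const fun r => Or.inl (by positivity)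
  exact (h1.const_mul 4).div (by have := continuous_ratio n hC; fun_prop)
    fun r => by have := ratio_nonneg n hC r; positivity

lemma subA_pos (n : ℕ) (hC : 0 < C) (r : ℝ) : 0 < subA n C r := by
  have := ratio_nonneg n hC r
  have : 0 < (C + r ^ 2) ^ (-(n : ℝ) / 2) := Real.rpow_pos_of_pos (by positivity) _
  unfold subA
  positivity

lemma pow_mul_subA_sq (n : ℕ) (hC : 0 < C) (r : ℝ) :
    (r ^ n * subA n C r) ^ 2 = 16 * ratio n C r / (3 + ratio n C r) ^ 2 := by
  rw [show r ^ n * subA n C r = 4 * (r ^ n * (C + r ^ 2) ^ (-(n : ℝ) / 2)) / (3 + ratio n C r) by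
    rw [subA]; ring, div_pow, mul_pow, pow_mul_rpow_sq hC]
  norm_num [ratio]

lemma admissible_sub (n : ℕ) (hC : 5 ≤ C) : Admissible n (subA n C) (subY n C) := by
  have hC0 : 0 < C := by linarith
  refine ⟨(continuous_subA n hC0).measurable, (continuous_subY n hC0).measurable,
    fun r => (subA_pos n hC0 r).le, fun r => ?_, fun r => ?_, fun r => ?_⟩
  · refine le_of_sq_le_sq ?_ (barrier_pos n r).le
    have hX0 := ratio_nonneg n hC0 r
    have hq0 := sq_div_nonneg hC0 r
    have hq1 := sq_div_le_one hC0 r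
    have hC1 : (1 + (1 - r ^ 2 / (C + r ^ 2)) / 3) ^ 2 ≤ (C + r ^ 2) / (1 + r ^ 2) := by
      have h1 : 1 + 7 / 9 * (1 - r ^ 2 / (C + r ^ 2)) ≤ (C + r ^ 2) / (1 + r ^ 2) := by
        rw [← sub_nonneg]
        have h2 : (C + r ^ 2) / (1 + r ^ 2) - (1 + 7 / 9 * (1 - r ^ 2 / (C + r ^ 2))) =
            (C * (9 * C - 16) + (2 * C - 9) * r ^ 2) / (9 * ((1 + r ^ 2) * (C + r ^ 2))) := by
          field_simp
          ring
        rw [h2]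
        exact div_nonneg (by nlinarith [sq_nonneg r]) (by positivity)
      nlinarith
    have hbern : 1 + n * ((1 - r ^ 2 / (C + r ^ 2)) / 3) ≤
        (1 + (1 - r ^ 2 / (C + r ^ 2)) / 3) ^ n :=
      one_add_mul_le_pow (by linarith) n
    have hbern' : 1 + (n : ℝ) * (r ^ 2 / (C + r ^ 2) - 1) ≤ ratio n C r := by
      have := one_add_mul_le_pow (a := r ^ 2 / (C + r ^ 2) - 1) (by linarith) n
      simpa [ratio] using this
    have h4 : 4 / (3 + ratio n C r) ≤ (1 + (1 - r ^ 2 / (C + r ^ 2)) / 3) ^ n := by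
      refine le_trans ?_ hbern
      rw [div_le_iff₀ (by positivity)]
      have : 0 ≤ (n : ℝ) * (1 - r ^ 2 / (C + r ^ 2)) := mul_nonneg n.cast_nonneg (by linarith)
      nlinarith
    have h5 : (4 / (3 + ratio n C r)) ^ 2 ≤ ((C + r ^ 2) / (1 + r ^ 2)) ^ n := by
      calc (4 / (3 + ratio n C r)) ^ 2 ≤ ((1 + (1 - r ^ 2 / (C + r ^ 2)) / 3) ^ n) ^ 2 := by gcongr
        _ = ((1 + (1 - r ^ 2 / (C + r ^ 2)) / 3) ^ 2) ^ n := pow_right_comm _ _ _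
        _ ≤ _ := by gcongr
    rw [barrier, rpow_neg_half_sq (by positivity), subA, mul_comm, mul_div_assoc, mul_pow,
      rpow_neg_half_sq (by positivity)]
    calc ((C + r ^ 2) ^ n)⁻¹ * (4 / (3 + ratio n C r)) ^ 2
        ≤ ((C + r ^ 2) ^ n)⁻¹ * ((C + r ^ 2) / (1 + r ^ 2)) ^ n := by gcongr
      _ = ((1 + r ^ 2) ^ n)⁻¹ := by
        rw [div_pow]
        field_simp
  · have := ratio_nonneg n hC0 r
    unfold subY
    positivity
  · have := ratio_nonneg n hC0 r
    have := ratio_le_one n hC0 r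
    exact div_le_one_of_le₀ (by linarith) (by positivity)

lemma hasDerivAt_ratio (hn : 1 ≤ n) (hC : 0 < C) {r : ℝ} (hr : 0 < r) :
    HasDerivAt (ratio n C) (2 * n * (1 - r ^ 2 / (C + r ^ 2)) * ratio n C r / r) r := by
  refine ((hasDerivAt_sq_div hC hr).fun_pow n).congr_deriv ?_
  rw [ratio, ← pow_sub_one_mul (by omega : n ≠ 0) (r ^ 2 / (C + r ^ 2))]
  ring

lemma hasDerivAt_subA (hn : 1 ≤ n) (hC : 0 < C) {r : ℝ} (hr : 0 < r) :
    HasDerivAt (subA n C) (subA n C r * (-n * (r ^ 2 / (C + r ^ 2)) -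
      2 * n * (1 - r ^ 2 / (C + r ^ 2)) * ratio n C r / (3 + ratio n C r)) / r) r := by
  have h0 := ratio_nonneg n hC r
  refine (((hasDerivAt_rpow_neg_half hC n hr).const_mul 4).fun_div
    ((hasDerivAt_ratio hn hC hr).const_add 3) (by positivity)).congr_deriv ?_
  rw [subA]
  generalize (C + r ^ 2) ^ (-(n : ℝ) / 2) = E
  generalize r ^ 2 / (C + r ^ 2) = q
  generalize ratio n C r = X at *
  field_simp

lemma hasDerivAt_subY (hn : 1 ≤ n) (hC : 0 < C) {r : ℝ} (hr : 0 < r) :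
    HasDerivAt (subY n C) (24 * n * (1 - r ^ 2 / (C + r ^ 2)) * ratio n C r /
      (3 + ratio n C r) ^ 2 / r) r := by
  have h0 := ratio_nonneg n hC r
  refine (((hasDerivAt_ratio hn hC hr).const_mul 4).fun_div
    ((hasDerivAt_ratio hn hC hr).const_add 3) (by positivity)).congr_deriv ?_
  generalize r ^ 2 / (C + r ^ 2) = q
  generalize ratio n C r = X at *
  field_simp
  ring

lemma sub_eq_radial_sq (hC : 0 < C) (r : ℝ) :
    r ^ 2 * (1 - r ^ 2 / (C + r ^ 2)) = C * (r ^ 2 / (C + r ^ 2)) := by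
  have : C + r ^ 2 ≠ 0 := by positivity
  field_simp
  ring

lemma amplitude_inequality {q X N R : ℝ} (hδ : δ ^ 2 ≤ 1)
    (hCn : 70 * N ^ 2 ≤ 3 / 2 * (1 - δ ^ 2) * C) (hX0 : 0 ≤ X) (hX1 : X ≤ 1) (hXq : X ≤ q)
    (hq1 : q ≤ 1) (hrq : R * (1 - q) = C * q) (hR : 0 ≤ R) (hN : 1 ≤ N) :
    0 ≤ (N * (1 - q) * ((3 - X) / (3 + X))) ^ 2 - N ^ 2 -
      2 * N * q * (1 - q) * ((3 - X) / (3 + X)) -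
      12 * N ^ 2 * (1 - q) ^ 2 * (X / (3 + X) ^ 2) +
      3 / 10 * (1 - δ ^ 2) * (R * (1 - X)) * ((9 - X) / (3 + X) ^ 2) := by
  have hd : 0 < 3 + X := by linarith
  have hg : 1 - 2 / 3 * q ≤ (3 - X) / (3 + X) := by
    rw [le_div_iff₀ hd]
    nlinarith
  have hg1 : (3 - X) / (3 + X) ≤ 1 := div_le_one_of_le₀ (by linarith) hd.le
  have hs : X / (3 + X) ^ 2 ≤ q / 9 := by
    rw [div_le_iff₀ (by positivity)]
    nlinarith [mul_nonneg hX0 hX0, mul_nonneg hX0 (hX0.trans hXq),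
      mul_nonneg (mul_nonneg hX0 hX0) (hX0.trans hXq)]
  have ht : 1 / 2 ≤ (9 - X) / (3 + X) ^ 2 := by
    rw [le_div_iff₀ (by positivity)]
    nlinarith
  have hs0 : 0 ≤ X / (3 + X) ^ 2 := by positivity
  generalize (3 - X) / (3 + X) = g at *
  generalize X / (3 + X) ^ 2 = s at *
  generalize (9 - X) / (3 + X) ^ 2 = t at *
  have hq0 : 0 ≤ q := hX0.trans hXq
  have hNq : 0 ≤ N ^ 2 * q := by positivity
  have hRX : C * q ≤ R * (1 - X) := by
    rw [← hrq]
    gcongr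
  have h1 : 70 * (N ^ 2 * q) ≤ 3 / 2 * ((1 - δ ^ 2) * (R * (1 - X))) := by
    nlinarith [mul_le_mul_of_nonneg_right hCn hq0,
      mul_le_mul_of_nonneg_left hRX (sub_nonneg.2 hδ)]
  have h2 : 7 * (N ^ 2 * q) ≤ 3 / 10 * ((1 - δ ^ 2) * (R * (1 - X)) * t) := by
    have h3 : 0 ≤ (1 - δ ^ 2) * (R * (1 - X)) := by linarith
    have := mul_le_mul_of_nonneg_left ht h3
    linarith
  set w := (1 - q) * g with hw
  have hw1 : 1 - 5 / 3 * q ≤ w := by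
    nlinarith [mul_le_mul_of_nonneg_left hg (sub_nonneg.2 hq1)]
  have hw2 : w ≤ 1 := by nlinarith [mul_le_mul_of_nonneg_left hg1 (sub_nonneg.2 hq1)]
  have h4 : 1 - 10 / 3 * q ≤ w ^ 2 := by nlinarith [sq_nonneg (w - 1)]
  have h6 : (1 - q) ^ 2 * s ≤ q / 9 := by
    have : (1 - q) ^ 2 ≤ 1 := by nlinarith
    exact (mul_le_of_le_one_left hs0 this).trans hs
  have h7 : N * q * w ≤ N ^ 2 * q := by
    have e1 := mul_le_mul_of_nonneg_left hw2 (by positivity : 0 ≤ N * q)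
    have e2 : 0 ≤ N * q * (N - 1) := mul_nonneg (by positivity) (by linarith)
    linarith
  have e4 := mul_le_mul_of_nonneg_left h4 (sq_nonneg N)
  have e6 := mul_le_mul_of_nonneg_left h6 (sq_nonneg N)
  have hfin : (N * (1 - q) * g) ^ 2 - N ^ 2 - 2 * N * q * (1 - q) * g -
      12 * N ^ 2 * (1 - q) ^ 2 * s + 3 / 10 * (1 - δ ^ 2) * (R * (1 - X)) * t =
      N ^ 2 * w ^ 2 - N ^ 2 - 2 * (N * q * w) - 12 * (N ^ 2 * ((1 - q) ^ 2 * s)) +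
        3 / 10 * ((1 - δ ^ 2) * (R * (1 - X)) * t) := by
    rw [hw]
    ring
  rw [hfin]
  linarith

lemma order_inequality {q X N R : ℝ} (hδ : δ ^ 2 ≤ 1) (hCn : 10 * N ≤ (1 - δ) * C)
    (hX0 : 0 ≤ X) (hX1 : X ≤ 1) (hXq : X ≤ q) (hrq : R * (1 - q) = C * q)
    (hR : 0 ≤ R) (hN : 1 ≤ N) :
    0 ≤ 48 * N ^ 2 * (1 - q) ^ 2 * ((3 - X) / (3 + X)) - 48 * N * q * (1 - q) +
      48 / 10 * (1 - δ) * (R * (1 - X)) +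
      36 / 10 * (1 - δ ^ 2) * (R * (1 - X)) * ((1 - X) / (3 + X)) := by
  have hq0 : 0 ≤ q := hX0.trans hXq
  have hδ1 : 0 ≤ 1 - δ := by linarith [le_of_abs_le ((sq_le_one_iff_abs_le_one δ).1 hδ)]
  have hX1' : 0 ≤ 1 - X := by linarith
  have hRX : C * q ≤ R * (1 - X) := by
    rw [← hrq]
    gcongr
  have h1 : 10 * (N * q) ≤ (1 - δ) * (R * (1 - X)) := by
    nlinarith [mul_le_mul_of_nonneg_right hCn hq0, mul_le_mul_of_nonneg_left hRX hδ1]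
  have h2 : 0 ≤ 48 * N ^ 2 * (1 - q) ^ 2 * ((3 - X) / (3 + X)) :=
    mul_nonneg (by positivity) (div_nonneg (by linarith) (by linarith))
  have h3 : 0 ≤ 36 / 10 * (1 - δ ^ 2) * (R * (1 - X)) * ((1 - X) / (3 + X)) :=
    mul_nonneg (mul_nonneg (by linarith) (by positivity)) (by positivity)
  have h4 : 0 ≤ N * q * q := by positivity
  nlinarith

lemma subA_le_stepA (hn : 1 ≤ n) (hC : 5 ≤ C) (hδ : δ ^ 2 ≤ 1)
    (hCn : 70 * (n : ℝ) ^ 2 ≤ 3 / 2 * (1 - δ ^ 2) * C) (r : ℝ) :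
    subA n C r ≤ stepA n δ (subA n C) (subY n C) r := by
  have hC0 : 0 < C := by linarith
  have hcA := continuous_subA n hC0
  have hcY := continuous_subY n hC0
  have hcX := continuous_ratio n hC0
  have hne : ∀ r : ℝ, C + r ^ 2 ≠ 0 := fun r => by positivity
  have hne3 : ∀ r : ℝ, 3 + ratio n C r ≠ 0 := fun r => by
    have := ratio_nonneg n hC0 r
    positivity
  have hadm := admissible_sub n hC
  have key : ∀ r, 0 ≤ r → subA n C r ≤ stepA n δ (subA n C) (subY n C) r := by
    intro r hr
    refine le_radialInverse (j := 2 * n) (B := 1)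
      (m := fun r => subA n C r * (-n * (r ^ 2 / (C + r ^ 2)) -
        2 * n * (1 - r ^ 2 / (C + r ^ 2)) * ratio n C r / (3 + ratio n C r)))
      (m₂ := fun r => subA n C r * ((-n * (r ^ 2 / (C + r ^ 2)) -
        2 * n * (1 - r ^ 2 / (C + r ^ 2)) * ratio n C r / (3 + ratio n C r)) ^ 2 -
        2 * n * (r ^ 2 / (C + r ^ 2)) * (1 - r ^ 2 / (C + r ^ 2)) *
          ((3 - ratio n C r) / (3 + ratio n C r)) -
        12 * n ^ 2 * (1 - r ^ 2 / (C + r ^ 2)) ^ 2 * ratio n C r / (3 + ratio n C r) ^ 2))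
      (hadm.growthA hδ) (by unfold sourceA; fun_prop) hcA ?_ ?_ ?_ ?_ ?_ hr
    · intro r
      rw [abs_of_pos (subA_pos n hC0 r)]
      exact (hadm.fst_le r).trans (barrier_le_one n r)
    · exact fun r hr => hasDerivAt_subA hn hC0 hr
    · intro r hr
      have h0 := ratio_nonneg n hC0 r
      have hX := hasDerivAt_ratio hn hC0 hr
      have hq := hasDerivAt_sq_div hC0 hr
      refine ((hasDerivAt_subA hn hC0 hr).fun_mul ((hq.const_mul (-(n : ℝ))).fun_sub
        ((((hq.const_sub 1).const_mul (2 * (n : ℝ))).fun_mul hX).fun_div (hX.const_add 3)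
          (hne3 r)))).congr_deriv ?_
      generalize r ^ 2 / (C + r ^ 2) = q
      generalize subA n C r = A
      generalize ratio n C r = X at *
      field_simp
      ring
    · have hc : Continuous fun r : ℝ => subA n C r * (-n * (r ^ 2 / (C + r ^ 2)) -
          2 * n * (1 - r ^ 2 / (C + r ^ 2)) * ratio n C r / (3 + ratio n C r)) := by
        fun_prop (disch := assumption)
      have h0 : ratio n C 0 = 0 := by simp [ratio, Nat.one_le_iff_ne_zero.1 hn]
      simpa [h0] using (hc.tendsto 0).mono_left (nhdsWithin_le_nhds (s := Ioi 0))
    · intro r hr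
      have hA := subA_pos n hC0 r
      unfold sourceA
      rw [pow_mul_subA_sq n hC0, subY]
      have hX0 := ratio_nonneg n hC0 r
      have hX1 := ratio_le_one n hC0 r
      have hXq := ratio_le hn hC0 r
      have hq1 := sq_div_le_one hC0 r
      have hrq := sub_eq_radial_sq hC0 r
      have hn' : (1:ℝ) ≤ n := by exact_mod_cast hn
      push_cast
      generalize r ^ 2 / (C + r ^ 2) = q at *
      generalize subA n C r = A at *
      generalize ratio n C r = X at *
      generalize (n : ℝ) = N at *
      have hR := sq_nonneg r
      generalize r ^ 2 = R at *
      have hid : A * ((-N * q - 2 * N * (1 - q) * X / (3 + X)) ^ 2 -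
            2 * N * q * (1 - q) * ((3 - X) / (3 + X)) -
            12 * N ^ 2 * (1 - q) ^ 2 * X / (3 + X) ^ 2) +
          2 * N * (A * (-N * q - 2 * N * (1 - q) * X / (3 + X))) -
          R * (R + 2 * N + 2) * A +
          R * ((R + 2 * N + 2) * A - 1 / 10 * A * (3 * (16 * X / (3 + X) ^ 2 - 1) +
            δ ^ 2 * ((1 - 4 * X / (3 + X)) * (3 - 4 * X / (3 + X))))) =
          A * ((N * (1 - q) * ((3 - X) / (3 + X))) ^ 2 - N ^ 2 -
            2 * N * q * (1 - q) * ((3 - X) / (3 + X)) -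
            12 * N ^ 2 * (1 - q) ^ 2 * (X / (3 + X) ^ 2) +
            3 / 10 * (1 - δ ^ 2) * (R * (1 - X)) * ((9 - X) / (3 + X) ^ 2)) := by
        field_simp
        ring
      rw [hid]
      exact mul_nonneg hA.le (amplitude_inequality hδ hCn hX0 hX1 hXq hq1 hrq hR hn')
  have := key |r| (abs_nonneg r)
  rw [stepA, radialInverse_abs] at this
  simpa [subA, ratio, stepA] using this

lemma subY_le_stepY (hn : 1 ≤ n) (hC : 5 ≤ C) (hδ : δ ^ 2 ≤ 1)
    (hCn : 10 * (n : ℝ) ≤ (1 - δ) * C) (r : ℝ) :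
    subY n C r ≤ stepY n δ (subA n C) (subY n C) r := by
  have hC0 : 0 < C := by linarith
  have hcA := continuous_subA n hC0
  have hcY := continuous_subY n hC0
  have hcX := continuous_ratio n hC0
  have hne : ∀ r : ℝ, C + r ^ 2 ≠ 0 := fun r => by positivity
  have hne3 : ∀ r : ℝ, (3 + ratio n C r) ^ 2 ≠ 0 := fun r => by
    have := ratio_nonneg n hC0 r
    positivity
  have hadm := admissible_sub n hC
  have key : ∀ r, 0 ≤ r → subY n C r ≤ stepY n δ (subA n C) (subY n C) r := by
    intro r hr
    refine le_radialInverse (j := 0) (B := 1)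
      (m := fun r => 24 * n * (1 - r ^ 2 / (C + r ^ 2)) * ratio n C r / (3 + ratio n C r) ^ 2)
      (m₂ := fun r => 48 * n * (1 - r ^ 2 / (C + r ^ 2)) * ratio n C r / (3 + ratio n C r) ^ 3 *
        (n * (1 - r ^ 2 / (C + r ^ 2)) * (3 - ratio n C r) -
          r ^ 2 / (C + r ^ 2) * (3 + ratio n C r)))
      (hadm.growthY hδ) (by unfold sourceY; fun_prop) hcY ?_ ?_ ?_ ?_ ?_ hr
    · intro r
      rw [abs_of_nonneg (hadm.snd_nonneg r)]
      exact hadm.snd_le r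
    · exact fun r hr => hasDerivAt_subY hn hC0 hr
    · intro r hr
      have h0 := ratio_nonneg n hC0 r
      have hX := hasDerivAt_ratio hn hC0 hr
      have hq := hasDerivAt_sq_div hC0 hr
      refine ((((hq.const_sub 1).const_mul (24 * (n : ℝ))).fun_mul hX).fun_div
        ((hX.const_add 3).fun_pow 2) (hne3 r)).congr_deriv ?_
      generalize r ^ 2 / (C + r ^ 2) = q
      generalize ratio n C r = X at *
      field_simp
      ring
    · have hc : Continuous fun r : ℝ => 24 * n * (1 - r ^ 2 / (C + r ^ 2)) * ratio n C r /
          (3 + ratio n C r) ^ 2 := by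
        fun_prop (disch := assumption)
      have h0 : ratio n C 0 = 0 := by simp [ratio, Nat.one_le_iff_ne_zero.1 hn]
      simpa [h0] using (hc.tendsto 0).mono_left (nhdsWithin_le_nhds (s := Ioi 0))
    · intro r hr
      unfold sourceY
      rw [pow_mul_subA_sq n hC0, subY]
      have hX0 := ratio_nonneg n hC0 r
      have hX1 := ratio_le_one n hC0 r
      have hXq := ratio_le hn hC0 r
      have hq1 := sq_div_le_one hC0 r
      have hrq := sub_eq_radial_sq hC0 r
      have hn' : (1:ℝ) ≤ n := by exact_mod_cast hn
      generalize r ^ 2 / (C + r ^ 2) = q at *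
      generalize ratio n C r = X at *
      generalize (n : ℝ) = N at *
      have hR := sq_nonneg r
      generalize r ^ 2 = R at *
      have hid : 48 * N * (1 - q) * X / (3 + X) ^ 3 * (N * (1 - q) * (3 - X) - q * (3 + X)) +
          ((0 : ℕ) : ℝ) * (24 * N * (1 - q) * X / (3 + X) ^ 2) -
          R * (R + ((0 : ℕ) : ℝ) + 2) * (4 * X / (3 + X)) +
          R * ((R + 2) * (4 * X / (3 + X)) - 1 / 10 * ((1 + δ * (1 - 4 * X / (3 + X))) *
            (3 + δ * (1 - 4 * X / (3 + X))) * (4 * X / (3 + X)) -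
            3 * (16 * X / (3 + X) ^ 2) * (2 - 4 * X / (3 + X)))) =
          X / (3 + X) ^ 2 * (48 * N ^ 2 * (1 - q) ^ 2 * ((3 - X) / (3 + X)) - 48 * N * q * (1 - q) +
            48 / 10 * (1 - δ) * (R * (1 - X)) +
            36 / 10 * (1 - δ ^ 2) * (R * (1 - X)) * ((1 - X) / (3 + X))) := by
        field_simp
        ring
      rw [hid]
      exact mul_nonneg (by positivity) (order_inequality hδ hCn hX0 hX1 hXq hrq hR hn')
  have := key |r| (abs_nonneg r)
  rw [stepY, radialInverse_abs] at this
  simpa [subY, ratio, stepY] using this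

lemma tendsto_ratio (n : ℕ) (hC : 0 < C) : Tendsto (ratio n C) atTop (𝓝 1) := by
  have h1 : Tendsto (fun r : ℝ => C + r ^ 2) atTop atTop :=
    tendsto_atTop_add_const_left _ _ (tendsto_pow_atTop two_ne_zero)
  have h2 : Tendsto (fun r : ℝ => 1 - C / (C + r ^ 2)) atTop (𝓝 (1 - 0)) :=
    (h1.const_div_atTop C).const_sub 1
  have h3 := (h2.pow n).congr (f₂ := ratio n C) fun r => by
    have : C + r ^ 2 ≠ 0 := by positivity
    rw [ratio, one_sub_div this, add_sub_cancel_left]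
  simpa using h3

lemma tendsto_subY (n : ℕ) (hC : 0 < C) : Tendsto (subY n C) atTop (𝓝 1) := by
  have h1 := tendsto_ratio n hC
  have h2 := (h1.const_mul 4).div (h1.const_add 3) (by norm_num)
  norm_num at h2
  exact h2

lemma tendsto_pow_mul_subA (n : ℕ) (hC : 0 < C) :
    Tendsto (fun r => r ^ n * subA n C r) atTop (𝓝 1) := by
  have h1 := tendsto_ratio n hC
  have h2 := ((h1.const_mul 16).div ((h1.const_add 3).pow 2) (by norm_num)).sqrt
  norm_num at h2
  refine h2.congr' ?_
  filter_upwards [eventually_ge_atTop 0] with r hr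
  have := subA_pos n hC r
  rw [← pow_mul_subA_sq n hC, Real.sqrt_sq (by positivity)]

/-- The normalized system has a pair of ordered fixed points above a positive subsolution. -/
theorem exists_normalized (hn : 1 ≤ n) (hδ : δ ^ 2 < 1) :
    ∃ a y : ℝ → ℝ, Admissible n a y ∧ (∀ r, 0 < a r) ∧
      Tendsto (fun r => r ^ n * a r) atTop (𝓝 1) ∧ Tendsto y atTop (𝓝 1) ∧
      stepA n δ a y = a ∧ stepY n δ a y = y := by
  have hδ1 : 0 < 1 - δ := by linarith [lt_of_abs_lt ((sq_lt_one_iff_abs_lt_one δ).1 hδ)]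
  have hδ2 : 0 < 1 - δ ^ 2 := by linarith
  have hn0 : (0:ℝ) ≤ n := n.cast_nonneg
  set C : ℝ := 5 + 10 * n / (1 - δ) + 140 / 3 * n ^ 2 / (1 - δ ^ 2) with hC
  have e1 : 0 ≤ 10 * n / (1 - δ) := by positivity
  have e2 : 0 ≤ 140 / 3 * n ^ 2 / (1 - δ ^ 2) := by positivity
  have hC5 : 5 ≤ C := by linarith
  have hC0 : 0 < C := by linarith
  have h1 : 10 * (n : ℝ) ≤ (1 - δ) * C := by
    rw [mul_comm (1 - δ), ← div_le_iff₀ hδ1]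
    linarith
  have h2 : 70 * (n : ℝ) ^ 2 ≤ 3 / 2 * (1 - δ ^ 2) * C := by
    have : 140 / 3 * (n : ℝ) ^ 2 ≤ C * (1 - δ ^ 2) := by
      rw [← div_le_iff₀ hδ2]
      linarith
    linarith
  obtain ⟨a, y, hay, ha, hy, hA, hY⟩ := exists_fixedPoint (admissible_sub n hC5) hn hδ.le
    (subA_le_stepA hn hC5 hδ.le h2) (subY_le_stepY hn hC5 hδ.le h1)
  refine ⟨a, y, hay, fun r => (subA_pos n hC0 r).trans_le (ha r), ?_, ?_, hA, hY⟩
  · refine tendsto_of_tendsto_of_tendsto_of_le_of_le' (tendsto_pow_mul_subA n hC0)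
      tendsto_const_nhds ?_ (Eventually.of_forall fun r => le_of_abs_le
        ((sq_le_one_iff_abs_le_one _).1 (hay.sq_le_one r)))
    filter_upwards [eventually_ge_atTop 0] with r hr
    exact mul_le_mul_of_nonneg_left (ha r) (pow_nonneg hr n)
  · exact tendsto_of_tendsto_of_tendsto_of_le_of_le (tendsto_subY n hC0) tendsto_const_nhds hy
      hay.snd_le

/-! ### Regularity and the normalized solution -/

variable {a y : ℝ → ℝ}

lemma contDiff_fixedPoint (hay : Admissible n a y) (hδ : δ ^ 2 ≤ 1) (hA : stepA n δ a y = a)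
    (hY : stepY n δ a y = y) (m : ℕ) : ContDiff ℝ m a ∧ ContDiff ℝ m y := by
  have hae : ∀ r, a (-r) = a r := fun r => by
    rw [← hA, stepA, ← radialInverse_abs, abs_neg, radialInverse_abs]
  have hye : ∀ r, y (-r) = y r := fun r => by
    rw [← hY, stepY, ← radialInverse_abs, abs_neg, radialInverse_abs]
  induction m with
  | zero =>
    have h1 : Continuous a := hA ▸ continuous_radialInverse (hay.growthA hδ)
    have h2 : Continuous y := hY ▸ continuous_radialInverse (hay.growthY hδ)
    exact ⟨contDiff_zero.2 h1, contDiff_zero.2 h2⟩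
  | succ m ih =>
    obtain ⟨h1, h2⟩ := ih
    have hsA : ContDiff ℝ m fun r => sourceA n δ (a r) (y r) r := by
      unfold sourceA
      fun_prop
    have hsY : ContDiff ℝ m fun r => sourceY n δ (a r) (y r) r := by
      unfold sourceY
      fun_prop
    have h3 := contDiff_radialInverse (e := 2 * n + 1) (hay.growthA hδ)
      (fun r => by simp [sourceA, hae, hye, mul_pow, ← pow_mul, mul_comm n 2]) hsA
    have h4 := contDiff_radialInverse (e := 1) (hay.growthY hδ)
      (fun r => by simp [sourceY, hae, hye, mul_pow, ← pow_mul, mul_comm n 2]) hsY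
    push_cast
    exact ⟨hA ▸ h3, hY ▸ h4⟩

lemma deriv_zero_of_even (hye : ∀ r, y (-r) = y r) : deriv y 0 = 0 := by
  have h := deriv_comp_neg y 0
  rw [funext hye, neg_zero] at h
  linarith

lemma deriv_deriv_pow_mul (ha : ContDiff ℝ 2 a) {r : ℝ} (hr : 0 < r) :
    deriv (fun r => r ^ n * a r) r = r ^ n * (n / r * a r + deriv a r) ∧
    deriv (deriv fun r => r ^ n * a r) r = r ^ n *
      (deriv (deriv a) r + 2 * n / r * deriv a r + n * (n - 1) / r ^ 2 * a r) := by
  have hd : ∀ r, HasDerivAt a (deriv a r) r := fun r =>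
    (ha.differentiable (by norm_num) r).hasDerivAt
  have hp : ∀ r : ℝ, 0 < r → HasDerivAt (fun r : ℝ => r ^ n) (n / r * r ^ n) r := by
    intro r hr
    refine (hasDerivAt_pow n r).congr_deriv ?_
    cases n with
    | zero => simp
    | succ m => simp only [add_tsub_cancel_right, pow_succ]; field_simp
  have h1 : ∀ r : ℝ, 0 < r → deriv (fun r => r ^ n * a r) r = r ^ n * (n / r * a r + deriv a r) :=
    fun r hr => by rw [((hp r hr).fun_mul (hd r)).deriv]; ring
  refine ⟨h1 r hr, ?_⟩
  have h2 : deriv (fun r => r ^ n * a r) =ᶠ[𝓝 r] fun r => r ^ n * (n / r * a r + deriv a r) := by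
    filter_upwards [lt_mem_nhds hr] with x hx using h1 x hx
  have hdd : HasDerivAt (deriv a) (deriv (deriv a) r) r :=
    (((contDiff_succ_iff_deriv (n := 1)).1 ha).2.2.differentiable (by norm_num) r).hasDerivAt
  rw [h2.deriv_eq]
  have hi : HasDerivAt (fun r : ℝ => n / r) (-n / r ^ 2) r := by
    simpa [div_eq_mul_inv] using (hasDerivAt_inv hr.ne').const_mul (n : ℝ)
  rw [((hp r hr).fun_mul ((hi.fun_mul (hd r)).fun_add hdd)).deriv]
  field_simp
  ring

/-- The normalized profiles solving the boundary value problem. -/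
theorem exists_profiles (hn : 1 ≤ n) (hδ : δ ^ 2 < 1) :
    ∃ U y : ℝ → ℝ, ContDiff ℝ (⊤ : ℕ∞) U ∧ ContDiff ℝ (⊤ : ℕ∞) y ∧
      (∀ r, 0 < r → deriv (deriv U) r + deriv U r / r - n ^ 2 * U r / r ^ 2 =
        1 / 10 * U r * (3 * (U r ^ 2 - 1) + δ ^ 2 * ((1 - y r) * (3 - y r)))) ∧
      (∀ r, 0 < r → deriv (deriv y) r + deriv y r / r = 1 / 10 *
        ((1 + δ * (1 - y r)) * (3 + δ * (1 - y r)) * y r - 3 * U r ^ 2 * (2 - y r))) ∧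
      U 0 = 0 ∧ deriv y 0 = 0 ∧ Tendsto U atTop (𝓝 1) ∧ Tendsto y atTop (𝓝 1) ∧
      (∀ r, 0 < r → 0 < U r) ∧ ∀ r, 0 ≤ y r ∧ y r ≤ 1 := by
  obtain ⟨a, y, hay, ha, htA, htY, hA, hY⟩ := exists_normalized hn hδ
  have hreg := contDiff_fixedPoint hay hδ.le hA hY
  have hca : ContDiff ℝ (⊤ : ℕ∞) a := contDiff_infty.2 fun m => (hreg m).1
  have hcy : ContDiff ℝ (⊤ : ℕ∞) y := contDiff_infty.2 fun m => (hreg m).2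
  refine ⟨fun r => r ^ n * a r, y, by fun_prop, hcy, fun r hr => ?_, fun r hr => ?_,
    by simp [Nat.one_le_iff_ne_zero.1 hn], ?_, htA, htY, fun r hr => ?_,
    fun r => ⟨hay.snd_nonneg r, hay.snd_le r⟩⟩
  · obtain ⟨h1, h2⟩ := deriv_deriv_pow_mul (n := n) (hreg 2).1 hr
    have hs : Continuous fun r => sourceA n δ (a r) (y r) r := by
      have := hca.continuous
      have := hcy.continuous
      unfold sourceA
      fun_prop
    have h3 := (radialInverse_ode (e := 2 * n + 1) (hay.growthA hδ.le) hs hr).deriv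
    rw [show radialInverse (2 * n + 1) (fun r => sourceA n δ (a r) (y r) r) = a from hA] at h3
    rw [h1, h2, h3, sourceA]
    push_cast
    field_simp
    ring
  · have hs : Continuous fun r => sourceY n δ (a r) (y r) r := by
      have := hca.continuous
      have := hcy.continuous
      unfold sourceY
      fun_prop
    have h3 := (radialInverse_ode (e := 1) (hay.growthY hδ.le) hs hr).deriv
    rw [show radialInverse 1 (fun r => sourceY n δ (a r) (y r) r) = y from hY] at h3
    rw [h3, sourceY]
    push_cast
    ring
  · refine deriv_zero_of_even fun r => ?_
    rw [← hY, stepY, ← radialInverse_abs, abs_neg, radialInverse_abs]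
  · have := ha r
    positivity

lemma deriv_affine_comp (A B σ : ℝ) (f : ℝ → ℝ) :
    (deriv fun r => A * f (σ * r) + B) = fun r => A * σ * deriv f (σ * r) := by
  ext r
  rw [deriv_add_const, deriv_const_mul_field, deriv_comp_mul_left, smul_eq_mul, mul_assoc]

lemma deriv_deriv_affine_comp (A B σ : ℝ) (f : ℝ → ℝ) (r : ℝ) :
    deriv (deriv fun r => A * f (σ * r) + B) r = A * σ ^ 2 * deriv (deriv f) (σ * r) := by
  have h := congrFun (deriv_affine_comp (A * σ) 0 σ (deriv f)) r
  rw [deriv_affine_comp, ← add_zero (fun r => A * σ * deriv f (σ * r))]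
  rw [sq, ← mul_assoc, ← h]
  rfl

lemma lt_splus {a2 b2 c2 : ℝ} (ha : 0 < a2) (hb : 0 < b2) (hc : 0 < c2) :
    b2 < 2 * c2 * splus a2 b2 c2 := by
  have h : b2 < √(b2 ^ 2 + 24 * a2 * c2) :=
    Real.lt_sqrt_of_sq_lt (by nlinarith [mul_pos ha hc])
  rw [splus, show 2 * c2 * ((b2 + √(b2 ^ 2 + 24 * a2 * c2)) / (4 * c2)) =
    (b2 + √(b2 ^ 2 + 24 * a2 * c2)) / 2 by field_simp; ring]
  linarith

lemma splus_quadratic {a2 b2 c2 : ℝ} (ha : 0 < a2) (hc : 0 < c2) :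
    2 * c2 * splus a2 b2 c2 ^ 2 - b2 * splus a2 b2 c2 - 3 * a2 = 0 := by
  have h : √(b2 ^ 2 + 24 * a2 * c2) ^ 2 = b2 ^ 2 + 24 * a2 * c2 :=
    Real.sq_sqrt (by positivity)
  rw [splus]
  generalize √(b2 ^ 2 + 24 * a2 * c2) = x at *
  field_simp
  linear_combination 2 * h

end

/-- existence of a solution `(u,v)` of the ODE system with the stated
boundary conditions, with `u > 0` and `v < 0` on `(0,∞)`. -/
theorem stmt2 (a2 b2 c2 : ℝ) (ha : 0 < a2) (hb : 0 < b2) (hc : 0 < c2)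
    (k : ℤ) (hk : k ≠ 0) :
    ∃ u v : ℝ → ℝ,
      ContDiffOn ℝ 2 u (Set.Ici 0) ∧ ContDiffOn ℝ (⊤ : ℕ∞) u (Set.Ioi 0) ∧
      ContDiffOn ℝ (⊤ : ℕ∞) v (Set.Ici 0) ∧
      (∀ r : ℝ, 0 < r →
        (deriv (deriv u) r + deriv u r / r - (k : ℝ)^2 * u r / r^2 =
          u r * (-a2 + Real.sqrt (2/3) * b2 * v r + c2 * ((u r)^2 + (v r)^2))) ∧
        (deriv (deriv v) r + deriv v r / r =
          v r * (-a2 - (1 / Real.sqrt 6) * b2 * v r + c2 * ((u r)^2 + (v r)^2))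
            + (1 / Real.sqrt 6) * b2 * (u r)^2)) ∧
      u 0 = 0 ∧ derivWithin v (Set.Ici 0) 0 = 0 ∧
      Filter.Tendsto u Filter.atTop (nhds (splus a2 b2 c2 / Real.sqrt 2)) ∧
      Filter.Tendsto v Filter.atTop (nhds (-(splus a2 b2 c2) / Real.sqrt 6)) ∧
      (∀ r : ℝ, 0 < r → 0 < u r ∧ v r < 0) := by
  have hlt := lt_splus ha hb hc
  have hquad := splus_quadratic (b2 := b2) ha hc
  generalize splus a2 b2 c2 = s at *
  have hs : 0 < s := by
    by_contra! h
    nlinarith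
  obtain ⟨δ, hδ⟩ : ∃ δ : ℝ, c2 * s * (1 - δ) = b2 := ⟨1 - b2 / (c2 * s), by field_simp; ring⟩
  have ha2 : a2 = c2 * s ^ 2 * (1 + δ) / 3 := by linear_combination -hquad / 3 + s * hδ / 3
  have hcs : 0 < c2 * s := mul_pos hc hs
  have hδ1 : -1 < δ := by nlinarith
  have hδ2 : δ < 1 := by nlinarith
  have hδsq : δ ^ 2 < 1 := by nlinarith
  obtain ⟨U, y, hU, hy, hodeU, hodeY, hU0, hy0, htU, htY, hUpos, hy01⟩ :=
    exists_profiles (n := k.natAbs) (Int.natAbs_pos.2 hk) hδsq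
  have hk2 : ((k.natAbs : ℕ) : ℝ) ^ 2 = (k : ℝ) ^ 2 := by
    rw [Nat.cast_natAbs, Int.cast_abs, sq_abs]
  obtain ⟨σ, hσ, hσ2⟩ : ∃ σ : ℝ, 0 < σ ∧ σ ^ 2 = 10 * (c2 * s ^ 2 / 6) :=
    ⟨√(10 * (c2 * s ^ 2 / 6)), by positivity, Real.sq_sqrt (by positivity)⟩
  obtain ⟨ι, hι⟩ : ∃ ι : ℝ, ι = 1 / √6 := ⟨_, rfl⟩
  obtain ⟨κ, hκ⟩ : ∃ κ : ℝ, κ = 1 / √2 := ⟨_, rfl⟩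
  have hι0 : 0 < ι := by rw [hι]; positivity
  have hκ0 : 0 < κ := by rw [hκ]; positivity
  have hι2 : ι ^ 2 = 1 / 6 := by rw [hι, div_pow, Real.sq_sqrt (by norm_num), one_pow]
  have hκ2 : κ ^ 2 = 1 / 2 := by rw [hκ, div_pow, Real.sq_sqrt (by norm_num), one_pow]
  have h23 : √(2 / 3) = 2 * ι := by
    rw [Real.sqrt_eq_iff_mul_self_eq (by norm_num) (by positivity)]
    linear_combination -4 * hι2
  have htσ : Filter.Tendsto (fun r : ℝ => σ * r) Filter.atTop Filter.atTop := Filter.tendsto_id.const_mul_atTop hσ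
  have hu : ContDiff ℝ (⊤ : ℕ∞) fun r => s * κ * U (σ * r) + 0 := by fun_prop
  have hv : ContDiff ℝ (⊤ : ℕ∞) fun r => s * ι * δ * y (σ * r) + -(s * ι * (1 + δ)) := by fun_prop
  refine ⟨fun r => s * κ * U (σ * r) + 0, fun r => s * ι * δ * y (σ * r) + -(s * ι * (1 + δ)),
    (hu.of_le (by norm_cast)).contDiffOn, hu.contDiffOn, hv.contDiffOn,
    fun r hr => ⟨?_, ?_⟩, by simp [hU0], ?_, ?_, ?_, fun r hr => ⟨?_, ?_⟩⟩
  · have h := hodeU (σ * r) (by positivity)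
    rw [deriv_deriv_affine_comp, deriv_affine_comp, h23, ← hk2]
    beta_reduce
    generalize deriv (deriv U) (σ * r) = U'' at *
    generalize deriv U (σ * r) = U' at *
    generalize U (σ * r) = U at *
    generalize y (σ * r) = y at *
    calc _ = s * κ * σ ^ 2 *
          (U'' + U' / (σ * r) - (k.natAbs : ℝ) ^ 2 * U / (σ * r) ^ 2) := by
          field_simp
          ring
      _ = _ := by
        rw [h, hσ2, ha2, ← hδ]
        linear_combination -(s * κ * U * c2 * s ^ 2) * ((2 * (1 - δ) * (δ * y - 1 - δ) +
          (δ * y - 1 - δ) ^ 2) * hι2 + U ^ 2 * hκ2)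
  · have h := hodeY (σ * r) (by positivity)
    rw [deriv_deriv_affine_comp, deriv_affine_comp, ← hι]
    beta_reduce
    generalize deriv (deriv y) (σ * r) = y'' at *
    generalize deriv y (σ * r) = y' at *
    generalize U (σ * r) = U at *
    generalize y (σ * r) = y at *
    calc _ = s * ι * δ * σ ^ 2 * (y'' + y' / (σ * r)) := by
          field_simp
      _ = _ := by
        rw [h, hσ2, ha2, ← hδ]
        linear_combination -(s * ι * c2 * s ^ 2) * (((δ * y - 1 - δ) ^ 3 -
          (1 - δ) * (δ * y - 1 - δ) ^ 2) * hι2 + ((δ * y - 1 - δ) + (1 - δ)) * U ^ 2 * hκ2)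
  · rw [(hv.differentiable (by simp) 0).derivWithin (uniqueDiffOn_Ici 0 0 Set.self_mem_Ici),
      deriv_affine_comp]
    simp [hy0]
  · rw [show s / √2 = s * κ * 1 + 0 by rw [hκ]; ring]
    exact ((htU.comp htσ).const_mul (s * κ)).add_const 0
  · rw [show -s / √6 = s * ι * δ * 1 + -(s * ι * (1 + δ)) by rw [hι]; ring]
    exact ((htY.comp htσ).const_mul (s * ι * δ)).add_const (-(s * ι * (1 + δ)))
  · have := hUpos (σ * r) (by positivity)
    positivity
  · obtain ⟨h0, h1⟩ := hy01 (σ * r)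
    have : 0 < 1 + δ * (1 - y (σ * r)) := by nlinarith
    nlinarith [mul_pos (mul_pos hs hι0) this]
end
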